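/- Let Γ be a countable non-amenable group and let f be a free p.m.p. action of Γ on a standard Borel probability space (X, μ). Then there exists a p.m.p. action g of Γ on (X, μ) weakly equivalent to f, and a free p.m.p. action h of the free group F_2 on two generators on (X, μ), such that for μ-almost every x ∈ X the F_2-orbit of x under h is contained in the Γ-orbit of x under g: for every t ∈ F_2 there exists γ ∈ Γ with h_t(x) = g_γ(x). -/

import Mathlib

open MeasureTheory

/-- A probability-measure-preserving action of a group `G` on a measure space. -/
structure PMP (G : Type*) [Group G] (X : Type*) [MeasurableSpace X] (μ : Measure X) where
  act : G → X → X
  measurable : ∀ γ, Measurable (act γ)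
  preserves : ∀ γ, MeasurePreserving (act γ) μ μ
  act_one : ∀ x, act 1 x = x
  act_mul : ∀ γ₁ γ₂ x, act (γ₁ * γ₂) x = act γ₁ (act γ₂ x)

/-- `f` weakly contains `g`. -/
def WeaklyContains {G : Type*} [Group G] {X Y : Type*} [MeasurableSpace X] [MeasurableSpace Y]
    {μ : Measure X} {ν : Measure Y} (f : PMP G X μ) (g : PMP G Y ν) : Prop :=
  ∀ n : ℕ, 1 ≤ n → ∀ C : Y → Fin n, Measurable C →
    ∀ F : Finset G, ∀ ε : ℝ, 0 < ε →
      ∃ D : X → Fin n, Measurable D ∧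
        ∀ i j : Fin n, ∀ γ ∈ F,
          |(μ (f.act γ '' (D ⁻¹' {i}) ∩ D ⁻¹' {j})).toReal -
            (ν (g.act γ '' (C ⁻¹' {i}) ∩ C ⁻¹' {j})).toReal| ≤ ε

/-- Weak equivalence of p.m.p. actions. -/
def WeaklyEquivalent {G : Type*} [Group G] {X Y : Type*} [MeasurableSpace X] [MeasurableSpace Y]
    {μ : Measure X} {ν : Measure Y} (f : PMP G X μ) (g : PMP G Y ν) : Prop :=
  WeaklyContains f g ∧ WeaklyContains g f

/-- The action `f` is (essentially) free. -/
def IsFreeAction {G : Type*} [Group G] {X : Type*} [MeasurableSpace X] {μ : Measure X}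
    (f : PMP G X μ) : Prop :=
  ∀ᵐ x ∂μ, ∀ γ : G, f.act γ x = x → γ = 1

/-- The ball of radius `r` around the identity in the Cayley graph `Cay(Γ, S)`. -/
def cayleyBall {Γ : Type*} [Group Γ] (S : Finset Γ) (r : ℕ) : Set Γ :=
  {γ | ∃ l : List Γ, l.length ≤ r ∧ (∀ x ∈ l, x ∈ S ∨ x⁻¹ ∈ S) ∧ l.prod = γ}

/-- The `k`-coloring of the `r`-ball around `x` induced by `φ` and the action `f`. -/
def ballColoring {Γ X : Type*} [Group Γ] [MeasurableSpace X] {μ : Measure X}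
    (f : PMP Γ X μ) (S : Finset Γ) (r k : ℕ) (φ : X → Fin k) (x : X) :
    cayleyBall S r → Fin k :=
  fun γ => φ (f.act ↑γ x)

/-- `φ` is an `(ε, L)`-good coloring for the action `f`. -/
def GoodColoring {Γ X : Type*} [Group Γ] [MeasurableSpace X] {μ : Measure X}
    (f : PMP Γ X μ) (S : Finset Γ) {r k : ℕ} (L : Set (cayleyBall S r → Fin k))
    (ε : ℝ) (φ : X → Fin k) : Prop :=
  Measurable φ ∧ 1 - ε ≤ (μ {x | ballColoring f S r k φ x ∈ L}).toReal

/-- The action `f` almost satisfies the rule `L`. -/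
def AlmostSatisfies {Γ X : Type*} [Group Γ] [MeasurableSpace X] {μ : Measure X}
    (f : PMP Γ X μ) (S : Finset Γ) {r k : ℕ} (L : Set (cayleyBall S r → Fin k)) : Prop :=
  ∀ ε : ℝ, 0 < ε → ∃ φ : X → Fin k, GoodColoring f S L ε φ

/-- The action `f` properly satisfies the rule `L`. -/
def ProperlySatisfies {Γ X : Type*} [Group Γ] [MeasurableSpace X] {μ : Measure X}
    (f : PMP Γ X μ) (S : Finset Γ) {r k : ℕ} (L : Set (cayleyBall S r → Fin k)) : Prop :=
  ∃ φ : X → Fin k, Measurable φ ∧ μ {x | ballColoring f S r k φ x ∈ L} = 1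

/-- A group is amenable if it admits a left-translation-invariant finitely additive
probability measure defined on all of its subsets. -/
def IsAmenable (Γ : Type*) [Group Γ] : Prop :=
  ∃ m : Set Γ → ℝ, (∀ A, 0 ≤ m A) ∧ m Set.univ = 1 ∧
    (∀ A B, Disjoint A B → m (A ∪ B) = m A + m B) ∧
    ∀ (γ : Γ) (A : Set Γ), m ((γ * ·) '' A) = m A

/-!
Label `Γ × ℕ` with independent elements of `Γ`, thinking of the label `ω (γ, n)` as an edge of
level `n` from `γ` to `ω (γ, n) * γ`, and let the labels of level `n` have the law of a symmetric
random walk at time `n + n₀`. Non-amenability makes the atoms of these laws decay exponentially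
(Kesten), so the edges of high level rarely close a cycle with edges of lower level. Select edges
greedily in the order of their levels, discarding those that would close a cycle or meet an already
matched source or target: by mixing of the Bernoulli shift almost every vertex ends up matched, so
the edges whose levels lie in a prescribed infinite set form an equivariant random bijection of `Γ`.
Disjoint sets of levels give the generators of a free group. Its action is free, since a closed
reduced path would have an edge of highest level closing a cycle.

This yields a free action of the free group inside the orbits of the product of `f` with a Bernoulli
shift. The product is weakly equivalent to `f` by the theorem of Abért and Weiss, and it can be
realised on the original space because atomless standard probability spaces are isomorphic.
-/

open MeasureTheory Set Filter Topology ProbabilityTheory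
open scoped ENNReal NNReal

/-! ### Measure-preserving actions -/

namespace PMP

variable {G X Y Z : Type*} [Group G] [MeasurableSpace X] [MeasurableSpace Y] [MeasurableSpace Z]
  {μ : Measure X} {ν : Measure Y} {ρ : Measure Z}

@[simp]
lemma act_inv_act (f : PMP G X μ) (γ : G) (x : X) : f.act γ⁻¹ (f.act γ x) = x := by
  rw [← f.act_mul, inv_mul_cancel, f.act_one]

@[simp]
lemma act_act_inv (f : PMP G X μ) (γ : G) (x : X) : f.act γ (f.act γ⁻¹ x) = x := by
  simpa using f.act_inv_act γ⁻¹ x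

lemma act_injective (f : PMP G X μ) (γ : G) : Function.Injective (f.act γ) :=
  Function.LeftInverse.injective (f.act_inv_act γ)

lemma image_act (f : PMP G X μ) (γ : G) (S : Set X) : f.act γ '' S = f.act γ⁻¹ ⁻¹' S :=
  congrFun (image_eq_preimage_of_inverse (f.act_inv_act γ) (f.act_act_inv γ)) S

lemma measurableSet_image_act (f : PMP G X μ) (γ : G) {S : Set X} (hS : MeasurableSet S) :
    MeasurableSet (f.act γ '' S) := by
  rw [image_act]
  exact f.measurable _ hS

lemma measure_image_act (f : PMP G X μ) (γ : G) {S : Set X} (hS : MeasurableSet S) :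
    μ (f.act γ '' S) = μ S := by
  rw [image_act, (f.preserves _).measure_preimage hS.nullMeasurableSet]

/-- The diagonal action on a product of two spaces, with the product measure. -/
protected def prod [SFinite μ] [SFinite ν] (f : PMP G X μ) (g : PMP G Y ν) :
    PMP G (X × Y) (μ.prod ν) where
  act γ := Prod.map (f.act γ) (g.act γ)
  measurable γ := (f.measurable γ).prodMap (g.measurable γ)
  preserves γ := (f.preserves γ).prod (g.preserves γ)
  act_one z := by simp [Prod.map, f.act_one, g.act_one]
  act_mul γ δ z := by simp [Prod.map, f.act_mul, g.act_mul]

end PMP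

section Freeness

variable {G X Y : Type*} [Group G] [MeasurableSpace X] [MeasurableSpace Y]
  {μ : Measure X} {ν : Measure Y}

lemma IsFreeAction.prod [SFinite μ] [SFinite ν] {f : PMP G X μ} (hf : IsFreeAction f)
    (g : PMP G Y ν) : IsFreeAction (f.prod g) := by
  filter_upwards [Measure.quasiMeasurePreserving_fst.ae hf] with z hz γ hγ
  exact hz γ (congrArg Prod.fst hγ)

lemma IsFreeAction.nullSingletonClass [MeasurableSingletonClass X] [IsFiniteMeasure μ]
    [Infinite G] {f : PMP G X μ} (hf : IsFreeAction f) : NullSingletonClass μ := by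
  refine ⟨fun x => by_contra fun hx => ?_⟩
  have hfx : ∀ γ : G, f.act γ x = x → γ = 1 := by
    by_contra hn
    exact hx (measure_mono_null (singleton_subset_iff.2 hn) hf)
  have hinj : Function.Injective fun γ : G => f.act γ x := fun γ δ (h : f.act γ x = f.act δ x) => by
    refine (inv_mul_eq_one.1 (hfx (δ⁻¹ * γ) ?_)).symm
    rw [f.act_mul, h, f.act_inv_act]
  have hmass (γ : G) : μ {f.act γ x} = μ {x} := by
    rw [← image_singleton, f.measure_image_act γ (measurableSet_singleton x)]
  let e := Infinite.natEmbedding G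
  have hdisj : Pairwise (Function.onFun Disjoint fun n : ℕ => ({f.act (e n) x} : Set X)) :=
    fun m n hmn => disjoint_singleton.2 fun h => hmn (e.injective (hinj h))
  have hU := measure_iUnion (μ := μ) hdisj fun n => measurableSet_singleton _
  simp only [hmass, ENNReal.tsum_const_eq_top_of_ne_zero hx] at hU
  exact measure_ne_top μ _ hU

end Freeness

section WeakContainment

variable {G X Y Z : Type*} [Group G] [MeasurableSpace X] [MeasurableSpace Y] [MeasurableSpace Z]
  {μ : Measure X} {ν : Measure Y} {ρ : Measure Z}

lemma WeaklyContains.of_factor (f : PMP G X μ) (g : PMP G Y ν) {π : X → Y}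
    (hπ : MeasurePreserving π μ ν) (heq : ∀ γ, ∀ᵐ x ∂μ, π (f.act γ x) = g.act γ (π x)) :
    WeaklyContains f g := by
  intro n _ C hC F ε hε
  refine ⟨C ∘ π, hC.comp hπ.measurable, fun i j γ _ => ?_⟩
  have hmeas : MeasurableSet (g.act γ '' (C ⁻¹' {i}) ∩ C ⁻¹' {j}) :=
    (g.measurableSet_image_act γ (hC (measurableSet_singleton i))).inter
      (hC (measurableSet_singleton j))
  have hae : (f.act γ '' ((C ∘ π) ⁻¹' {i}) ∩ (C ∘ π) ⁻¹' {j} : Set X) =ᵐ[μ]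
      π ⁻¹' (g.act γ '' (C ⁻¹' {i}) ∩ C ⁻¹' {j}) := by
    rw [PMP.image_act, PMP.image_act]
    filter_upwards [heq γ⁻¹] with x hx
    simp only [eq_iff_iff]
    change C (π (f.act γ⁻¹ x)) = i ∧ _ ↔ C (g.act γ⁻¹ (π x)) = i ∧ _
    rw [hx]
    rfl
  rw [measure_congr hae, hπ.measure_preimage hmeas.nullMeasurableSet, sub_self, abs_zero]
  exact hε.le

lemma WeaklyContains.trans {f : PMP G X μ} {g : PMP G Y ν} {h : PMP G Z ρ}
    (hfg : WeaklyContains f g) (hgh : WeaklyContains g h) : WeaklyContains f h := by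
  intro n hn C hC F ε hε
  obtain ⟨D, hD, hCD⟩ := hgh n hn C hC F (ε / 2) (half_pos hε)
  obtain ⟨E, hE, hDE⟩ := hfg n hn D hD F (ε / 2) (half_pos hε)
  refine ⟨E, hE, fun i j γ hγ => ?_⟩
  refine (abs_sub_le _ (ν (g.act γ '' (D ⁻¹' {i}) ∩ D ⁻¹' {j})).toReal _).trans ?_
  linarith [hDE i j γ hγ, hCD i j γ hγ]

end WeakContainment

/-! ### Isomorphism of atomless standard probability spaces -/

section Cdf

variable (m : Measure ℝ) [IsProbabilityMeasure m] [NullSingletonClass m]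

lemma continuous_cdf : Continuous (cdf m) := by
  refine continuous_iff_continuousAt.2 fun x => ?_
  rw [(cdf m).mono.continuousAt_iff_leftLim_eq_rightLim, (cdf m).rightLim_eq]
  refine le_antisymm ((cdf m).mono.leftLim_le le_rfl) ?_
  have hjump := (cdf m).measure_singleton x
  rw [measure_cdf, measure_singleton] at hjump
  exact sub_nonpos.1 (ENNReal.ofReal_eq_zero.1 hjump.symm)

lemma measure_cdf_preimage_Iic {t : ℝ} (ht : t < 1) : m (cdf m ⁻¹' Iic t) = ENNReal.ofReal t := by
  obtain ⟨b, hb⟩ := ((tendsto_cdf_atTop m).eventually (lt_mem_nhds ht)).exists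
  rcases (cdf m ⁻¹' Iic t).eq_empty_or_nonempty with hempty | ⟨a, ha⟩
  · rw [hempty, measure_empty, eq_comm, ENNReal.ofReal_eq_zero]
    by_contra! hpos
    obtain ⟨x, hx⟩ := ((tendsto_cdf_atBot m).eventually (gt_mem_nhds hpos)).exists
    exact hempty.le (show x ∈ cdf m ⁻¹' Iic t from hx.le)
  · obtain ⟨u, rfl⟩ :=
      mem_range_of_exists_le_of_exists_ge (continuous_cdf m) ⟨a, ha⟩ ⟨b, hb.le⟩
    have hbdd : BddAbove (cdf m ⁻¹' Iic (cdf m u)) :=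
      ⟨b, fun x hx => ((cdf m).mono.reflect_lt (lt_of_le_of_lt hx hb)).le⟩
    set s := sSup (cdf m ⁻¹' Iic (cdf m u))
    have hsu : cdf m s ≤ cdf m u :=
      (isClosed_Iic.preimage (continuous_cdf m)).csSup_mem ⟨u, mem_preimage.2 self_mem_Iic⟩ hbdd
    have hus : u ≤ s := le_csSup hbdd (mem_preimage.2 self_mem_Iic)
    have hIic : cdf m ⁻¹' Iic (cdf m u) = Iic s :=
      Subset.antisymm (fun x hx => le_csSup hbdd hx) fun x hx => ((cdf m).mono hx).trans hsu
    rw [hIic, ← ofReal_cdf, hsu.antisymm ((cdf m).mono hus)]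

lemma map_cdf_eq_volume_restrict : m.map (cdf m) = volume.restrict (Icc (0 : ℝ) 1) := by
  have hc := (continuous_cdf m).measurable
  have : IsProbabilityMeasure (m.map (cdf m)) := Measure.isProbabilityMeasure_map hc.aemeasurable
  refine Measure.ext_of_Iic _ _ fun t => ?_
  have hIcc : Iic t ∩ Icc (0 : ℝ) 1 = Icc 0 (min 1 t) := by
    ext x
    simp only [mem_inter_iff, mem_Iic, mem_Icc, le_min_iff]
    tauto
  rw [Measure.map_apply hc measurableSet_Iic, Measure.restrict_apply measurableSet_Iic, hIcc,
    Real.volume_Icc, sub_zero]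
  rcases lt_or_ge t 1 with ht | ht
  · rw [measure_cdf_preimage_Iic m ht, min_eq_right ht.le]
  · have huniv : cdf m ⁻¹' Iic t = univ := eq_univ_of_forall fun x => (cdf_le_one m x).trans ht
    rw [huniv, measure_univ, min_eq_left ht, ENNReal.ofReal_one]

end Cdf

/-- An isomorphism mod null sets between two measure spaces: a pair of measure-preserving maps,
defined everywhere, that are mutually inverse almost everywhere. -/
structure MeasureIso {X Y : Type*} [MeasurableSpace X] [MeasurableSpace Y] (μ : Measure X)
    (ν : Measure Y) where
  toFun : X → Y
  invFun : Y → X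
  measurePreserving_toFun : MeasurePreserving toFun μ ν
  measurePreserving_invFun : MeasurePreserving invFun ν μ
  left_inv : ∀ᵐ x ∂μ, invFun (toFun x) = x
  right_inv : ∀ᵐ y ∂ν, toFun (invFun y) = y

namespace MeasureIso

variable {X Y Z : Type*} [MeasurableSpace X] [MeasurableSpace Y] [MeasurableSpace Z]
  {μ : Measure X} {ν : Measure Y} {ρ : Measure Z}

/-- The inverse isomorphism mod null sets. -/
def symm (e : MeasureIso μ ν) : MeasureIso ν μ where
  toFun := e.invFun
  invFun := e.toFun
  measurePreserving_toFun := e.measurePreserving_invFun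
  measurePreserving_invFun := e.measurePreserving_toFun
  left_inv := e.right_inv
  right_inv := e.left_inv

/-- The composition of isomorphisms mod null sets. -/
def trans (e : MeasureIso μ ν) (e' : MeasureIso ν ρ) : MeasureIso μ ρ where
  toFun := e'.toFun ∘ e.toFun
  invFun := e.invFun ∘ e'.invFun
  measurePreserving_toFun := e'.measurePreserving_toFun.comp e.measurePreserving_toFun
  measurePreserving_invFun := e.measurePreserving_invFun.comp e'.measurePreserving_invFun
  left_inv := by
    filter_upwards [e.left_inv, e.measurePreserving_toFun.quasiMeasurePreserving.ae e'.left_inv]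
      with x hx hx'
    rw [Function.comp_apply, Function.comp_apply, hx', hx]
  right_inv := by
    filter_upwards [e'.right_inv, e'.measurePreserving_invFun.quasiMeasurePreserving.ae e.right_inv]
      with z hz hz'
    rw [Function.comp_apply, Function.comp_apply, hz', hz]

lemma nonempty_of_ae_leftInverse [MeasurableEq Y] {φ : X → Y} {ψ : Y → X}
    (hφ : MeasurePreserving φ μ ν) (hψ : Measurable ψ) (hψφ : ∀ᵐ x ∂μ, ψ (φ x) = x) :
    Nonempty (MeasureIso μ ν) := by
  refine ⟨⟨φ, ψ, hφ, ⟨hψ, ?_⟩, hψφ, ?_⟩⟩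
  · rw [← hφ.map_eq, Measure.map_map hψ hφ.measurable]
    exact (Measure.map_congr hψφ).trans Measure.map_id
  · have hfix : MeasurableSet {y | φ (ψ y) = y} :=
      measurableSet_eq_fun (hφ.measurable.comp hψ) measurable_id
    rw [← hφ.map_eq, ae_map_iff hφ.measurable.aemeasurable hfix]
    filter_upwards [hψφ] with x hx
    rw [hx]

end MeasureIso

section AtomlessStandard

variable {X Y : Type*} [MeasurableSpace X] [StandardBorelSpace X] [MeasurableSpace Y]
  [StandardBorelSpace Y] (μ : Measure X) (ν : Measure Y)

variable {μ ν} in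
lemma exists_measurable_ae_leftInverse [NeZero μ] {φ : X → Y}
    (hφ : MeasurePreserving φ μ ν) {N : Set X} (hN : MeasurableSet N) (hμN : μ N = 0)
    (hinj : InjOn φ Nᶜ) : ∃ ψ : Y → X, Measurable ψ ∧ ∀ᵐ x ∂μ, ψ (φ x) = x := by
  have : StandardBorelSpace (Nᶜ : Set X) := hN.compl.standardBorel
  have hemb : MeasurableEmbedding fun x : (Nᶜ : Set X) => φ x :=
    (hφ.measurable.comp measurable_subtype_coe).measurableEmbedding (injOn_iff_injective.1 hinj)
  have : Nonempty X := μ.nonempty_of_neZero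
  obtain ⟨ψ, hψ, hψφ⟩ := hemb.exists_measurable_extend (g := fun x : (Nᶜ : Set X) => (x : X))
    measurable_subtype_coe fun _ => inferInstance
  refine ⟨ψ, hψ, ?_⟩
  filter_upwards [compl_mem_ae_iff.2 hμN] with x hx
  exact congrFun hψφ ⟨x, hx⟩

/-- The map to `[0, 1]` is the distribution function; it is injective off the countably many
fibres over its values at rationals, which are null. -/
lemma nonempty_measureIso_volume_Icc [IsProbabilityMeasure μ] [NullSingletonClass μ] :
    Nonempty (MeasureIso μ (volume.restrict (Icc (0 : ℝ) 1))) := by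
  obtain ⟨e, he⟩ := exists_measurableEmbedding_real X
  set m := μ.map e with hm
  have : IsProbabilityMeasure m := Measure.isProbabilityMeasure_map he.measurable.aemeasurable
  have : NullSingletonClass m := ⟨fun x => by
    rw [hm, he.map_apply]
    exact (subsingleton_singleton.preimage he.injective).measure_zero μ⟩
  have hφ : MeasurePreserving (cdf m ∘ e) μ (volume.restrict (Icc (0 : ℝ) 1)) :=
    (⟨(continuous_cdf m).measurable, map_cdf_eq_volume_restrict m⟩ :
      MeasurePreserving (cdf m) m _).comp ⟨he.measurable, rfl⟩
  set N : Set X := ⋃ r : ℚ, cdf m ∘ e ⁻¹' {cdf m r}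
  have hNm : MeasurableSet N :=
    .iUnion fun r => hφ.measurable (measurableSet_singleton _)
  have hN0 : μ N = 0 := measure_iUnion_null fun r => by
    rw [hφ.measure_preimage (measurableSet_singleton _).nullMeasurableSet, measure_singleton]
  have hmono : ∀ x ∈ Nᶜ, ∀ y, cdf m (e x) = cdf m (e y) → e y ≤ e x := by
    intro x hx y hxy
    by_contra! hlt
    obtain ⟨r, hxr, hry⟩ := exists_rat_btwn hlt
    exact hx (mem_iUnion.2 ⟨r, ((cdf m).mono hxr.le).antisymm (((cdf m).mono hry.le).trans hxy.ge)⟩)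
  have hinj : InjOn (cdf m ∘ e) Nᶜ := fun x hx y hy hxy =>
    he.injective ((hmono y hy x hxy.symm).antisymm (hmono x hx y hxy))
  obtain ⟨ψ, hψ, hψφ⟩ := exists_measurable_ae_leftInverse hφ hNm hN0 hinj
  exact MeasureIso.nonempty_of_ae_leftInverse hφ hψ hψφ

lemma nonempty_measureIso [IsProbabilityMeasure μ] [NullSingletonClass μ]
    [IsProbabilityMeasure ν] [NullSingletonClass ν] : Nonempty (MeasureIso μ ν) := by
  obtain ⟨e⟩ := nonempty_measureIso_volume_Icc μ
  obtain ⟨e'⟩ := nonempty_measureIso_volume_Icc ν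
  exact ⟨e.trans e'.symm⟩

end AtomlessStandard

section Transport

variable {G X Y : Type*} [Group G] [MeasurableSpace X] [MeasurableSpace Y] {μ : Measure X}
  {ν : Measure Y}

namespace MeasureIso

/-- The points at which an isomorphism intertwines `a` with a genuine action. -/
def regularSet (e : MeasureIso μ ν) (a : PMP G Y ν) : Set X :=
  {x | e.invFun (e.toFun x) = x ∧
    ∀ γ, e.toFun (e.invFun (a.act γ (e.toFun x))) = a.act γ (e.toFun x)}

lemma regularSet_mem_ae (e : MeasureIso μ ν) [Countable G] (a : PMP G Y ν) :
    ∀ᵐ x ∂μ, x ∈ e.regularSet a := by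
  refine e.left_inv.and (ae_all_iff.2 fun γ => ?_)
  exact ((a.preserves γ).comp e.measurePreserving_toFun).quasiMeasurePreserving.ae e.right_inv

lemma invFun_act_mem_regularSet (e : MeasureIso μ ν) (a : PMP G Y ν) {x : X}
    (hx : x ∈ e.regularSet a) (γ : G) : e.invFun (a.act γ (e.toFun x)) ∈ e.regularSet a := by
  refine ⟨by rw [hx.2], fun δ => ?_⟩
  rw [hx.2, ← a.act_mul, hx.2]

lemma measurableSet_regularSet [Countable G] [MeasurableEq X] [MeasurableEq Y]
    (e : MeasureIso μ ν) (a : PMP G Y ν) : MeasurableSet (e.regularSet a) := by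
  have hφ := e.measurePreserving_toFun.measurable
  have hψ := e.measurePreserving_invFun.measurable
  have ha (γ : G) := (a.measurable γ).comp hφ
  exact (measurableSet_eq_fun (hψ.comp hφ) measurable_id).inter
    (measurableSet_setOfPred.2 (Measurable.forall fun γ =>
      measurableSet_setOfPred.1 (measurableSet_eq_fun (hφ.comp (hψ.comp (ha γ))) (ha γ))))

end MeasureIso

variable [Countable G] [MeasurableEq X] [MeasurableEq Y]

namespace PMP

open scoped Classical in
/-- The action obtained from `a` by conjugation with an isomorphism mod null sets; it fixes the
points outside the regular set. -/
noncomputable def transport (a : PMP G Y ν) (e : MeasureIso μ ν) : PMP G X μ where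
  act γ x := if x ∈ e.regularSet a then e.invFun (a.act γ (e.toFun x)) else x
  measurable γ := .ite (e.measurableSet_regularSet a) (e.measurePreserving_invFun.measurable.comp
    ((a.measurable γ).comp e.measurePreserving_toFun.measurable)) measurable_id
  preserves γ := by
    have hcomp := e.measurePreserving_invFun.comp ((a.preserves γ).comp e.measurePreserving_toFun)
    refine hcomp.congr
      (Measurable.ite (e.measurableSet_regularSet a) hcomp.measurable measurable_id) ?_
    filter_upwards [e.regularSet_mem_ae a] with x hx using (if_pos hx).symm
  act_one x := by
    split_ifs with hx
    · rw [a.act_one, hx.1]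
    · rfl
  act_mul γ δ x := by
    by_cases hx : x ∈ e.regularSet a
    · rw [if_pos hx, if_pos hx, if_pos (e.invFun_act_mem_regularSet a hx δ), hx.2, a.act_mul]
    · simp only [if_neg hx]

variable (a : PMP G Y ν) (e : MeasureIso μ ν)

lemma transport_act_ae :
    ∀ᵐ x ∂μ, ∀ γ, (a.transport e).act γ x = e.invFun (a.act γ (e.toFun x)) := by
  filter_upwards [e.regularSet_mem_ae a] with x hx γ
  exact if_pos hx

lemma toFun_transport_act_ae :
    ∀ᵐ x ∂μ, ∀ γ, e.toFun ((a.transport e).act γ x) = a.act γ (e.toFun x) := by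
  filter_upwards [e.regularSet_mem_ae a, a.transport_act_ae e] with x hx hact γ
  rw [hact, hx.2]

lemma weaklyEquivalent_transport : WeaklyEquivalent a (a.transport e) := by
  refine ⟨.of_factor _ _ e.measurePreserving_invFun fun γ => ?_,
    .of_factor _ _ e.measurePreserving_toFun fun γ => ?_⟩
  · filter_upwards [e.right_inv,
      e.measurePreserving_invFun.quasiMeasurePreserving.ae (a.transport_act_ae e)] with y hy hact
    rw [hact, hy]
  · filter_upwards [a.toFun_transport_act_ae e] with x hx using hx γ

end PMP

lemma IsFreeAction.transport {a : PMP G Y ν} (ha : IsFreeAction a) (e : MeasureIso μ ν) :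
    IsFreeAction (a.transport e) := by
  filter_upwards [a.toFun_transport_act_ae e,
    e.measurePreserving_toFun.quasiMeasurePreserving.ae ha] with x heq hfree γ hγ
  exact hfree γ (by rw [← heq, hγ])

end Transport

/-! ### Non-amenable groups -/

section Amenability

variable {Γ : Type*} [Group Γ]

lemma infinite_of_not_isAmenable (hna : ¬ IsAmenable Γ) : Infinite Γ := by
  by_contra hfin
  rw [not_infinite_iff_finite] at hfin
  have hcard : (Nat.card Γ : ℝ) ≠ 0 := Nat.cast_ne_zero.2 Nat.card_pos.ne'
  refine hna ⟨fun A => A.ncard / Nat.card Γ, fun A => by positivity, ?_, fun A B hAB => ?_,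
    fun γ A => ?_⟩
  · simp only [ncard_univ, div_self hcard]
  · simp only [ncard_union_eq hAB A.toFinite B.toFinite, Nat.cast_add, add_div]
  · simp only [ncard_image_of_injective A (mul_right_injective γ)]

lemma isAmenable_of_tendsto {I : Type*} (l : Filter I) [l.NeBot] (M : I → Set Γ → ℝ)
    (hnonneg : ∀ i A, 0 ≤ M i A) (huniv : ∀ i, M i univ = 1)
    (hunion : ∀ i A B, Disjoint A B → M i (A ∪ B) = M i A + M i B)
    (hinv : ∀ γ A, Tendsto (fun i => M i ((γ * ·) '' A) - M i A) l (𝓝 0)) : IsAmenable Γ := by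
  have hle (i A) : M i A ≤ 1 := by
    have hcompl := hunion i A Aᶜ disjoint_compl_right
    rw [union_compl_self, huniv] at hcompl
    linarith [hnonneg i Aᶜ]
  let U := Ultrafilter.of l
  have hlim (A : Set Γ) : ∃ L, Tendsto (fun i => M i A) U (𝓝 L) := by
    have hmem : ∀ᶠ i in U, M i A ∈ Icc (0 : ℝ) 1 := .of_forall fun i => ⟨hnonneg i A, hle i A⟩
    obtain ⟨L, -, hL⟩ := isCompact_Icc.ultrafilter_le_nhds (U.map fun i => M i A)
      (le_principal_iff.2 hmem)
    exact ⟨L, hL⟩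
  choose m hm using hlim
  refine ⟨m, fun A => ge_of_tendsto' (hm A) fun i => hnonneg i A, ?_, fun A B hAB => ?_,
    fun γ A => ?_⟩
  · exact tendsto_nhds_unique (hm univ) (by simp only [huniv, tendsto_const_nhds])
  · refine tendsto_nhds_unique (hm (A ∪ B)) ?_
    simpa only [hunion _ A B hAB] using (hm A).add (hm B)
  · exact sub_eq_zero.1 (tendsto_nhds_unique ((hm _).sub (hm A))
      ((hinv γ A).mono_left (Ultrafilter.of_le l)))

lemma isAmenable_of_reiter
    (H : ∀ S : Finset Γ, ∀ ε : ℝ, 0 < ε → ∃ u : Γ → ℝ, (∀ x, 0 ≤ u x) ∧ HasSum u 1 ∧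
      ∀ s ∈ S, Summable (fun x => |u (s * x) - u x|) ∧ ∑' x, |u (s * x) - u x| ≤ ε) :
    IsAmenable Γ := by
  classical
  choose u hnonneg hsum hinv using fun i : Finset Γ × ℕ => H i.1 (1 / (i.2 + 1)) (by positivity)
  have hsummable (i) (A : Set Γ) : Summable (A.indicator (u i)) := (hsum i).summable.indicator A
  refine isAmenable_of_tendsto atTop (fun i A => ∑' x, A.indicator (u i) x)
    (fun i A => tsum_nonneg fun x => indicator_nonneg (fun y _ => hnonneg i y) x)
    (fun i => by simp only [indicator_univ, (hsum i).tsum_eq])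
    (fun i A B hAB => ?_) fun γ A => ?_
  · rw [indicator_union_of_disjoint hAB, ← (hsummable i A).tsum_add (hsummable i B)]
  · have hbound : ∀ᶠ i : Finset Γ × ℕ in atTop,
        ‖∑' x, ((γ * ·) '' A).indicator (u i) x - ∑' x, A.indicator (u i) x‖ ≤ 1 / (i.2 + 1) := by
      filter_upwards [eventually_ge_atTop (({γ} : Finset Γ), 0)] with i hi
      obtain ⟨hdiff, hdiff_le⟩ := hinv i γ (hi.1 (Finset.mem_singleton_self γ))
      have htranslate : ∑' x, ((γ * ·) '' A).indicator (u i) x =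
          ∑' x, A.indicator (fun x => u i (γ * x)) x := by
        rw [← (Equiv.mulLeft γ).tsum_eq]
        refine tsum_congr fun x => ?_
        by_cases hx : x ∈ A <;> simp [hx]
      have hγ : Summable fun x => u i (γ * x) := (Equiv.mulLeft γ).summable_iff.2 (hsum i).summable
      rw [htranslate, ← (hγ.indicator A).tsum_sub (hsummable i A)]
      refine (tsum_of_norm_bounded hdiff.hasSum fun x => ?_).trans hdiff_le
      by_cases hx : x ∈ A <;> simp [hx]
    refine squeeze_zero_norm' hbound ?_
    have hsnd : Tendsto (fun i : Finset Γ × ℕ => i.2) atTop atTop := by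
      rw [← prod_atTop_atTop_eq]
      exact tendsto_snd
    exact tendsto_one_div_add_atTop_nhds_zero_nat.comp hsnd

/-- The squared `ℓ²`-norm, with the junk value `0` when the squares are not summable. -/
noncomputable def sqNorm {α : Type*} (ξ : α → ℝ) : ℝ := ∑' x, ξ x ^ 2

lemma sqNorm_nonneg {α : Type*} (ξ : α → ℝ) : 0 ≤ sqNorm ξ := tsum_nonneg fun x => sq_nonneg (ξ x)

lemma sqNorm_mul_left (ξ : Γ → ℝ) (s : Γ) : sqNorm (fun x => ξ (s * x)) = sqNorm ξ :=
  (Equiv.mulLeft s).tsum_eq fun x => ξ x ^ 2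

lemma summable_sq_mul_left {ξ : Γ → ℝ} (hξ : Summable fun x => ξ x ^ 2) (s : Γ) :
    Summable fun x => ξ (s * x) ^ 2 :=
  (Equiv.mulLeft s).summable_iff.2 hξ

lemma summable_sq_sub {α : Type*} {ξ η : α → ℝ} (hξ : Summable fun x => ξ x ^ 2)
    (hη : Summable fun x => η x ^ 2) : Summable fun x => (ξ x - η x) ^ 2 := by
  refine .of_nonneg_of_le (fun x => sq_nonneg _) (fun x => ?_) ((hξ.add hη).mul_left 2)
  nlinarith [sq_nonneg (ξ x + η x)]

lemma abs_sq_sub_sq_le {η : ℝ} (hη : 0 < η) (u v : ℝ) :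
    |u ^ 2 - v ^ 2| ≤ η⁻¹ * (u - v) ^ 2 + η * (u ^ 2 + v ^ 2) := by
  have hη' := inv_pos.2 hη
  have hamgm : 0 ≤ η⁻¹ * (|u - v| - η * |u + v|) ^ 2 := by positivity
  have hexpand : η⁻¹ * (|u - v| - η * |u + v|) ^ 2 =
      η⁻¹ * |u - v| ^ 2 + η * |u + v| ^ 2 - 2 * (|u + v| * |u - v|) := by
    field_simp
    ring
  rw [hexpand, sq_abs, sq_abs] at hamgm
  rw [sq_sub_sq, abs_mul]
  nlinarith [mul_nonneg hη.le (sq_nonneg (u - v)), mul_nonneg hη'.le (sq_nonneg (u - v))]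

lemma tsum_abs_sq_sub_sq_le {α : Type*} {ξ ζ : α → ℝ} (hξ : Summable fun x => ξ x ^ 2)
    (hζ : Summable fun x => ζ x ^ 2) {η : ℝ} (hη : 0 < η) :
    ∑' x, |ξ x ^ 2 - ζ x ^ 2| ≤
      η⁻¹ * sqNorm (fun x => ξ x - ζ x) + η * (sqNorm ξ + sqNorm ζ) := by
  have hsum := ((summable_sq_sub hξ hζ).hasSum.mul_left η⁻¹).add
    ((hξ.hasSum.add hζ.hasSum).mul_left η)
  exact hasSum_le (fun x => abs_sq_sub_sq_le hη _ _) (hξ.sub hζ).abs.hasSum hsum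

lemma isAmenable_of_almostInvariant_vectors
    (H : ∀ S : Finset Γ, ∀ δ : ℝ, 0 < δ → ∃ ξ : Γ → ℝ, Summable (fun x => ξ x ^ 2) ∧
      ∀ s ∈ S, sqNorm (fun x => ξ (s * x) - ξ x) < δ * sqNorm ξ) : IsAmenable Γ := by
  classical
  refine isAmenable_of_reiter fun S ε hε => ?_
  obtain ⟨ξ, hξ, hinv⟩ := H (insert 1 S) ((ε / 3) ^ 2) (by positivity)
  have hpos : 0 < sqNorm ξ := by
    refine (sqNorm_nonneg ξ).lt_of_ne fun h0 => ?_
    have h1 := hinv 1 (Finset.mem_insert_self 1 S)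
    rw [← h0, mul_zero] at h1
    exact h1.not_ge (sqNorm_nonneg _)
  refine ⟨fun x => ξ x ^ 2 / sqNorm ξ, fun x => by positivity, ?_, fun s hs => ?_⟩
  · rw [← div_self hpos.ne']
    exact hξ.hasSum.div_const (sqNorm ξ)
  · have hs' := (hinv s (Finset.mem_insert_of_mem hs)).le
    have hξs := summable_sq_mul_left hξ s
    simp only [← sub_div, abs_div, abs_of_pos hpos, tsum_div_const]
    refine ⟨(hξs.sub hξ).abs.div_const _, (div_le_iff₀ hpos).2 ?_⟩
    calc ∑' x, |ξ (s * x) ^ 2 - ξ x ^ 2|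
        ≤ (ε / 3)⁻¹ * sqNorm (fun x => ξ (s * x) - ξ x) + ε / 3 * (sqNorm ξ + sqNorm ξ) := by
          simpa only [sqNorm_mul_left] using tsum_abs_sq_sub_sq_le hξs hξ (div_pos hε three_pos)
      _ ≤ (ε / 3)⁻¹ * ((ε / 3) ^ 2 * sqNorm ξ) + ε / 3 * (sqNorm ξ + sqNorm ξ) := by gcongr
      _ = ε * sqNorm ξ := by
          field_simp
          ring

end Amenability

/-! ### Random walks -/

section Kesten

variable {Γ : Type*} [Group Γ]

lemma exists_symmetric_finset_spectral_gap (hna : ¬ IsAmenable Γ) :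
    ∃ S : Finset Γ, 1 ∈ S ∧ (∀ s, s⁻¹ ∈ S ↔ s ∈ S) ∧ ∃ δ : ℝ, 0 < δ ∧
      ∀ ξ : Γ → ℝ, Summable (fun x => ξ x ^ 2) →
        ∃ s ∈ S, δ * sqNorm ξ ≤ sqNorm (fun x => ξ (s * x) - ξ x) := by
  classical
  obtain ⟨S, δ, hδ, hgap⟩ : ∃ S : Finset Γ, ∃ δ : ℝ, 0 < δ ∧ ∀ ξ : Γ → ℝ,
      Summable (fun x => ξ x ^ 2) →
        ∃ s ∈ S, δ * sqNorm ξ ≤ sqNorm (fun x => ξ (s * x) - ξ x) := by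
    by_contra! hcon
    exact hna (isAmenable_of_almostInvariant_vectors hcon)
  refine ⟨insert 1 (S ∪ S.image (·⁻¹)), Finset.mem_insert_self _ _, fun s => ?_, δ, hδ,
    fun ξ hξ => ?_⟩
  · simp only [Finset.mem_insert, Finset.mem_union, Finset.mem_image, exists_eq_right,
      inv_eq_iff_eq_inv, inv_inv, inv_one]
    tauto
  · obtain ⟨s, hs, hle⟩ := hgap ξ hξ
    exact ⟨s, Finset.mem_insert_of_mem (Finset.mem_union_left _ hs), hle⟩

lemma sq_sum_le_card_mul_sum_sq_sub {ι : Type*} (S : Finset ι) (v : ι → ℝ) {a b : ι}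
    (ha : a ∈ S) (hb : b ∈ S) :
    (∑ t ∈ S, v t) ^ 2 ≤ S.card * ∑ t ∈ S, v t ^ 2 - 1 / 2 * (v a - v b) ^ 2 := by
  have hvariance : ∑ i ∈ S, ∑ j ∈ S, (v i - v j) ^ 2 =
      2 * (S.card * ∑ t ∈ S, v t ^ 2) - 2 * (∑ t ∈ S, v t) ^ 2 := by
    have hsq (i j) : (v i - v j) ^ 2 = v i ^ 2 + v j ^ 2 - 2 * (v i * v j) := by ring
    simp only [hsq, Finset.sum_sub_distrib, Finset.sum_add_distrib, Finset.sum_const,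
      nsmul_eq_mul, ← Finset.mul_sum, ← Finset.sum_mul]
    ring
  have hterm : (v a - v b) ^ 2 ≤ ∑ i ∈ S, ∑ j ∈ S, (v i - v j) ^ 2 :=
    (Finset.single_le_sum (f := fun j => (v a - v j) ^ 2) (fun j _ => sq_nonneg _) hb).trans
      (Finset.single_le_sum (f := fun i => ∑ j ∈ S, (v i - v j) ^ 2)
        (fun i _ => Finset.sum_nonneg fun j _ => sq_nonneg _) ha)
  linarith

/-- The averaging operator over a finite set `S` contracts `ℓ²` as soon as some element of `S`
moves `ξ` by a definite amount: the variance of the translates of `ξ` is the deficit in the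
Cauchy–Schwarz inequality. -/
lemma sqNorm_average_le {S : Finset Γ} (h1 : 1 ∈ S) (hS : ∀ s, s⁻¹ ∈ S ↔ s ∈ S) {δ : ℝ}
    {ξ : Γ → ℝ} (hξ : Summable fun x => ξ x ^ 2) {s : Γ} (hs : s ∈ S)
    (hgap : δ * sqNorm ξ ≤ sqNorm (fun x => ξ (s * x) - ξ x)) :
    sqNorm (fun x => (∑ t ∈ S, ξ (t⁻¹ * x)) / S.card) ≤
      (1 - δ / (2 * S.card ^ 2)) * sqNorm ξ := by
  have hk : (0 : ℝ) < S.card := Nat.cast_pos.2 (Finset.card_pos.2 ⟨1, h1⟩)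
  have hpoint (x : Γ) : ((∑ t ∈ S, ξ (t⁻¹ * x)) / S.card) ^ 2 ≤
      (S.card * ∑ t ∈ S, ξ (t⁻¹ * x) ^ 2 - 1 / 2 * (ξ (s * x) - ξ x) ^ 2) / S.card ^ 2 := by
    have h := sq_sum_le_card_mul_sum_sq_sub S (fun t => ξ (t⁻¹ * x)) ((hS s).2 hs) h1
    simp only [inv_inv, inv_one, one_mul] at h
    rw [div_pow]
    gcongr
  have htranslate (t : Γ) : HasSum (fun x => ξ (t⁻¹ * x) ^ 2) (sqNorm ξ) :=
    (Equiv.mulLeft t⁻¹).hasSum_iff (f := fun x => ξ x ^ 2).2 hξ.hasSum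
  have hdiff := (summable_sq_sub (summable_sq_mul_left hξ s) hξ).hasSum
  have hsum := (((hasSum_sum fun t (_ : t ∈ S) => htranslate t).mul_left (S.card : ℝ)).sub
    (hdiff.mul_left (1 / 2))).div_const ((S.card : ℝ) ^ 2)
  have hsummable : Summable fun x => ((∑ t ∈ S, ξ (t⁻¹ * x)) / S.card) ^ 2 :=
    .of_nonneg_of_le (fun x => sq_nonneg _) hpoint hsum.summable
  calc sqNorm (fun x => (∑ t ∈ S, ξ (t⁻¹ * x)) / S.card)
      ≤ (S.card * ∑ _t ∈ S, sqNorm ξ - 1 / 2 * sqNorm fun x => ξ (s * x) - ξ x) / S.card ^ 2 :=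
        hasSum_le hpoint hsummable.hasSum hsum
    _ ≤ (S.card * ∑ _t ∈ S, sqNorm ξ - 1 / 2 * (δ * sqNorm ξ)) / S.card ^ 2 := by gcongr
    _ = (1 - δ / (2 * S.card ^ 2)) * sqNorm ξ := by
        rw [Finset.sum_const, nsmul_eq_mul]
        field_simp

/-- The law at time `n` of the random walk on `Γ` started at `1` with step distribution `σ`. -/
noncomputable def walkLaw (σ : PMF Γ) : ℕ → PMF Γ
  | 0 => PMF.pure 1
  | n + 1 => σ.bind fun s => (walkLaw σ n).map (s * ·)

lemma walkLaw_add (σ : PMF Γ) (m n : ℕ) :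
    walkLaw σ (m + n) = (walkLaw σ m).bind fun s => (walkLaw σ n).map (s * ·) := by
  induction m with
  | zero =>
    simp only [zero_add, walkLaw, PMF.pure_bind, one_mul]
    exact (PMF.map_id _).symm
  | succ m ih =>
    rw [Nat.succ_add]
    simp only [walkLaw, ih, PMF.bind_bind, PMF.map_bind, PMF.bind_map, PMF.map_comp,
      Function.comp_def, mul_assoc]

lemma walkLaw_succ' (σ : PMF Γ) (n : ℕ) :
    walkLaw σ (n + 1) = (walkLaw σ n).bind fun s => σ.map (s * ·) := by
  rw [walkLaw_add σ n 1]
  simp [walkLaw, PMF.pure_map, PMF.bind_pure]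

lemma walkLaw_map_inv {σ : PMF Γ} (hσ : σ.map (·⁻¹) = σ) (n : ℕ) :
    (walkLaw σ n).map (·⁻¹) = walkLaw σ n := by
  induction n with
  | zero => simp [walkLaw, PMF.pure_map]
  | succ n ih =>
    calc (walkLaw σ (n + 1)).map (·⁻¹)
        = (walkLaw σ n).bind fun x => σ.bind fun s => PMF.pure (s⁻¹ * x⁻¹) := by
          simp [walkLaw_succ', PMF.map, Function.comp_def]
      _ = (σ.map (·⁻¹)).bind fun s => ((walkLaw σ n).map (·⁻¹)).map (s * ·) := by
          rw [PMF.bind_comm]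
          simp [PMF.map, Function.comp_def]
      _ = walkLaw σ (n + 1) := by rw [hσ, ih, walkLaw]

lemma map_mul_left_apply (p : PMF Γ) (s x : Γ) : p.map (s * ·) x = p (s⁻¹ * x) := by
  classical
  rw [PMF.map_apply, tsum_eq_single (s⁻¹ * x)]
  · simp
  · rintro y hy
    exact if_neg fun h => hy (by simp [h])

lemma map_inv_apply (p : PMF Γ) (x : Γ) : p.map (·⁻¹) x = p x⁻¹ := by
  classical
  rw [PMF.map_apply, tsum_eq_single x⁻¹]
  · simp
  · rintro y hy
    exact if_neg fun h => hy (by simp [h])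

lemma summable_sq_toReal {α : Type*} (p : PMF α) : Summable fun x => (p x).toReal ^ 2 := by
  have hp : Summable fun x => (p x).toReal := ENNReal.summable_toReal p.tsum_coe_ne_top
  refine hp.of_nonneg_of_le (fun x => sq_nonneg _) fun x => ?_
  exact pow_le_of_le_one ENNReal.toReal_nonneg (ENNReal.toReal_le_of_le_ofReal zero_le_one
    (by simpa using p.coe_le_one x)) two_ne_zero

lemma toReal_walkLaw_succ {S : Finset Γ} (hS : S.Nonempty) (n : ℕ) (x : Γ) :
    (walkLaw (PMF.uniformOfFinset S hS) (n + 1) x).toReal =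
      (∑ s ∈ S, (walkLaw (PMF.uniformOfFinset S hS) n (s⁻¹ * x)).toReal) / S.card := by
  classical
  rw [walkLaw, PMF.bind_apply, tsum_eq_sum (s := S), ENNReal.toReal_sum, Finset.sum_div]
  · refine Finset.sum_congr rfl fun s hs => ?_
    rw [PMF.uniformOfFinset_apply_of_mem _ hs, map_mul_left_apply, ENNReal.toReal_mul]
    simp [div_eq_inv_mul]
  · exact fun s _ => ENNReal.mul_ne_top (PMF.apply_ne_top _ _) (PMF.apply_ne_top _ _)
  · exact fun s hs => by rw [PMF.uniformOfFinset_apply_of_notMem _ hs, zero_mul]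

/-- A symmetric convolution semigroup of laws on `Γ` whose atoms decay exponentially. -/
structure IsDecayingWalk (p : ℕ → PMF Γ) (ρ : ℝ≥0∞) : Prop where
  lt_one : ρ < 1
  add_eq_bind (m n : ℕ) : p (m + n) = (p m).bind fun s => (p n).map (s * ·)
  map_inv (n : ℕ) : (p n).map (·⁻¹) = p n
  le_pow (n : ℕ) (s : Γ) : p n s ≤ ρ ^ n

lemma IsDecayingWalk.tsum_mul {p : ℕ → PMF Γ} {ρ : ℝ≥0∞} (hp : IsDecayingWalk p ρ) (m n : ℕ)
    (x : Γ) : ∑' s, p m s * p n (s⁻¹ * x) = p (m + n) x := by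
  simp only [hp.add_eq_bind, PMF.bind_apply, map_mul_left_apply]

lemma IsDecayingWalk.apply_inv {p : ℕ → PMF Γ} {ρ : ℝ≥0∞} (hp : IsDecayingWalk p ρ) (n : ℕ)
    (x : Γ) : p n x⁻¹ = p n x := by
  rw [← map_inv_apply, hp.map_inv]

lemma map_inv_uniformOfFinset {S : Finset Γ} (hS : S.Nonempty) (hinv : ∀ s, s⁻¹ ∈ S ↔ s ∈ S) :
    (PMF.uniformOfFinset S hS).map (·⁻¹) = PMF.uniformOfFinset S hS := by
  classical
  ext x
  simp only [map_inv_apply, PMF.uniformOfFinset_apply, hinv]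

/-- Kesten's theorem; the steps of the walk are uniform on a finite set with a spectral gap. -/
theorem exists_isDecayingWalk (hna : ¬ IsAmenable Γ) :
    ∃ (p : ℕ → PMF Γ) (ρ : ℝ≥0∞), IsDecayingWalk p ρ := by
  classical
  obtain ⟨S, h1, hinv, δ, hδ, hgap⟩ := exists_symmetric_finset_spectral_gap hna
  have hcard : (0 : ℝ) < S.card := Nat.cast_pos.2 (Finset.card_pos.2 ⟨1, h1⟩)
  set r : ℝ := max 0 (1 - δ / (2 * S.card ^ 2)) with hr
  have hr0 : 0 ≤ r := le_max_left _ _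
  have hr1 : r < 1 := max_lt one_pos (by simp only [sub_lt_self_iff]; positivity)
  set p := walkLaw (PMF.uniformOfFinset S ⟨1, h1⟩) with hp
  have hdecay (n : ℕ) : sqNorm (fun x => (p n x).toReal) ≤ r ^ n := by
    induction n with
    | zero => simp [hp, walkLaw, sqNorm, PMF.pure_apply, apply_ite ENNReal.toReal]
    | succ n ih =>
      have hsummable := summable_sq_toReal (p n)
      obtain ⟨s, hs, hle⟩ := hgap _ hsummable
      calc sqNorm (fun x => (p (n + 1) x).toReal)
          = sqNorm fun x => (∑ s ∈ S, (p n (s⁻¹ * x)).toReal) / S.card :=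
            congrArg sqNorm (funext (toReal_walkLaw_succ ⟨1, h1⟩ n))
        _ ≤ (1 - δ / (2 * S.card ^ 2)) * sqNorm (fun x => (p n x).toReal) :=
            sqNorm_average_le (ξ := fun x => (p n x).toReal) h1 hinv hsummable hs hle
        _ ≤ r * r ^ n :=
            mul_le_mul (le_max_right _ _) ih (sqNorm_nonneg _) hr0
        _ = r ^ (n + 1) := (pow_succ' r n).symm
  refine ⟨p, ENNReal.ofReal √r, ?_, walkLaw_add _,
    walkLaw_map_inv (map_inv_uniformOfFinset _ hinv), fun n x => ?_⟩
  · rw [ENNReal.ofReal_lt_one, Real.sqrt_lt' one_pos]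
    simpa using hr1
  · rw [← ENNReal.ofReal_pow (Real.sqrt_nonneg r), ENNReal.le_ofReal_iff_toReal_le
      (PMF.apply_ne_top _ _) (by positivity)]
    refine le_of_sq_le_sq ?_ (by positivity)
    rw [← pow_mul, mul_comm, pow_mul, Real.sq_sqrt hr0]
    exact ((summable_sq_toReal (p n)).le_tsum x fun _ _ => sq_nonneg _).trans (hdecay n)

end Kesten

/-! ### Piecewise translations -/

lemma measure_eq_tsum_inter_preimage_singleton {X Y : Type*} [MeasurableSpace X] (μ : Measure X)
    [Countable Y] [MeasurableSpace Y] [MeasurableSingletonClass Y] {τ : X → Y}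
    (hτ : Measurable τ) {M : Set X} (hM : MeasurableSet M) :
    μ M = ∑' s, μ (M ∩ τ ⁻¹' {s}) := by
  conv_lhs => rw [← inter_univ M, ← preimage_univ (f := τ), ← iUnion_of_singleton Y,
    preimage_iUnion, inter_iUnion]
  exact measure_iUnion (fun s t hst => (Disjoint.preimage τ (disjoint_singleton.2 hst)).mono
    inter_subset_right inter_subset_right) fun s => hM.inter (hτ (measurableSet_singleton s))

section Along

variable {G X : Type*} [Group G] [MeasurableSpace X] {μ : Measure X}

/-- The map that moves every point `x` by the group element `τ x`. -/
def PMP.along (f : PMP G X μ) (τ : X → G) (x : X) : X := f.act (τ x) x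

variable (f : PMP G X μ) {τ σ : X → G} {M : Set X}

lemma PMP.image_along_eq_iUnion :
    f.along τ '' M = ⋃ s, f.act s '' (M ∩ τ ⁻¹' {s}) := by
  ext y
  simp only [mem_image, mem_iUnion, mem_inter_iff, mem_preimage, mem_singleton_iff, PMP.along]
  exact ⟨fun ⟨x, hx, h⟩ => ⟨τ x, x, ⟨hx, rfl⟩, h⟩,
    fun ⟨_, x, ⟨hx, hs⟩, h⟩ => ⟨x, hx, by rwa [hs]⟩⟩

variable [Countable G] [MeasurableSpace G] [MeasurableSingletonClass G]

lemma PMP.measurable_along (hτ : Measurable τ) : Measurable (f.along τ) :=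
  (measurable_from_prod_countable_right (f := fun p : G × X => f.act p.1 p.2)
    f.measurable).comp (hτ.prodMk measurable_id)

lemma PMP.measurableSet_image_along (hτ : Measurable τ) (hM : MeasurableSet M) :
    MeasurableSet (f.along τ '' M) := by
  rw [f.image_along_eq_iUnion]
  exact .iUnion fun s =>
    f.measurableSet_image_act s (hM.inter (hτ (measurableSet_singleton s)))

lemma PMP.measure_image_along (hτ : Measurable τ) (hM : MeasurableSet M)
    (hinj : InjOn (f.along τ) M) : μ (f.along τ '' M) = μ M := by
  have hpiece (s : G) : MeasurableSet (M ∩ τ ⁻¹' {s}) := hM.inter (hτ (measurableSet_singleton s))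
  rw [f.image_along_eq_iUnion, measure_iUnion _ fun s => f.measurableSet_image_act s (hpiece s)]
  · simp_rw [f.measure_image_act _ (hpiece _)]
    exact (measure_eq_tsum_inter_preimage_singleton μ hτ hM).symm
  · rintro s t hst
    refine disjoint_left.2 ?_
    rintro _ ⟨x, ⟨hx, rfl⟩, rfl⟩ ⟨y, ⟨hy, rfl⟩, hxy⟩
    exact hst (congrArg τ (hinj hx hy hxy.symm))

lemma PMP.measurePreserving_along (hτ : Measurable τ) (hσ : Measurable σ)
    (hleft : Function.LeftInverse (f.along σ) (f.along τ))
    (hright : Function.RightInverse (f.along σ) (f.along τ)) :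
    MeasurePreserving (f.along τ) μ μ := by
  refine ⟨f.measurable_along hτ, Measure.ext fun S hS => ?_⟩
  rw [Measure.map_apply (f.measurable_along hτ) hS, ← image_eq_preimage_of_inverse hright hleft,
    f.measure_image_along hσ hS hright.injective.injOn]

end Along

section FreeGroup

variable {G X ι : Type*} [Group G] [MeasurableSpace X] {μ : Measure X}

/-- The permutations of `X` moving `x` by `τ (c, true) x`, with inverses given by `τ (c, false)`. -/
def PMP.alongPerm (f : PMP G X μ) (τ : ι × Bool → X → G)
    (hτ : ∀ c b x, τ (c, !b) (f.along (τ (c, b)) x) = (τ (c, b) x)⁻¹) (c : ι) : Equiv.Perm X where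
  toFun := f.along (τ (c, true))
  invFun := f.along (τ (c, false))
  left_inv x := by
    have h := hτ c true x
    simp only [Bool.not_true] at h
    rw [PMP.along, h, PMP.along, f.act_inv_act]
  right_inv x := by
    have h := hτ c false x
    simp only [Bool.not_false] at h
    rw [PMP.along, h, PMP.along, f.act_inv_act]

/-- The element of `G` by which the word `L` in the letters `(c, b)`, acting from right to left
through the moves `τ`, moves `x`. -/
def PMP.wordCocycle (f : PMP G X μ) (τ : ι × Bool → X → G) : List (ι × Bool) → X → G
  | [], _ => 1
  | a :: L, x => τ a (f.act (f.wordCocycle τ L x) x) * f.wordCocycle τ L x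

lemma PMP.wordCocycle_drop (f : PMP G X μ) (τ : ι × Bool → X → G) {L : List (ι × Bool)} {i : ℕ}
    (hi : i < L.length) (x : X) :
    f.wordCocycle τ (L.drop (L.length - (i + 1))) x =
      τ L[L.length - (i + 1)] (f.act (f.wordCocycle τ (L.drop (L.length - i)) x) x) *
        f.wordCocycle τ (L.drop (L.length - i)) x := by
  rw [List.drop_eq_getElem_cons (by omega), show L.length - (i + 1) + 1 = L.length - i by omega]
  rfl

variable (f : PMP G X μ) {τ : ι × Bool → X → G}
  (hτ : ∀ c b x, τ (c, !b) (f.along (τ (c, b)) x) = (τ (c, b) x)⁻¹)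

lemma PMP.lift_alongPerm_mk (L : List (ι × Bool)) (x : X) :
    FreeGroup.lift (f.alongPerm τ hτ) (FreeGroup.mk L) x = f.act (f.wordCocycle τ L x) x := by
  rw [FreeGroup.lift_mk]
  induction L with
  | nil => exact (f.act_one x).symm
  | cons a L ih =>
    obtain ⟨c, _ | _⟩ := a <;>
    · simp only [List.map_cons, List.prod_cons, Equiv.Perm.mul_apply, ih, PMP.wordCocycle,
        f.act_mul]
      rfl

variable [Countable G] [MeasurableSpace G] [MeasurableSingletonClass G]

/-- The action of the free group in which the generator `c` moves `x` by `τ (c, true) x`. -/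
def PMP.freeGroupAlong (hmeas : ∀ a, Measurable (τ a)) : PMP (FreeGroup ι) X μ :=
  have hpreserves (t : FreeGroup ι) :
      MeasurePreserving (FreeGroup.lift (f.alongPerm τ hτ) t) μ μ := by
    induction t using FreeGroup.induction_on with
    | C1 => exact MeasurePreserving.id μ
    | of c =>
      rw [FreeGroup.lift_apply_of]
      exact f.measurePreserving_along (hmeas _) (hmeas (c, false)) (f.alongPerm τ hτ c).left_inv
        (f.alongPerm τ hτ c).right_inv
    | inv_of c _ =>
      rw [map_inv, FreeGroup.lift_apply_of]
      exact f.measurePreserving_along (hmeas _) (hmeas (c, true)) (f.alongPerm τ hτ c).right_inv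
        (f.alongPerm τ hτ c).left_inv
    | mul s t hs ht =>
      rw [map_mul]
      exact hs.comp ht
  { act := fun t => FreeGroup.lift (f.alongPerm τ hτ) t
    measurable := fun t => (hpreserves t).measurable
    preserves := hpreserves
    act_one := fun x => by rw [map_one, Equiv.Perm.one_apply]
    act_mul := fun s t x => by rw [map_mul, Equiv.Perm.mul_apply] }

lemma PMP.freeGroupAlong_act [DecidableEq ι] (hmeas : ∀ a, Measurable (τ a)) (t : FreeGroup ι)
    (x : X) :
    (f.freeGroupAlong hτ hmeas).act t x = f.act (f.wordCocycle τ t.toWord x) x := by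
  rw [← f.lift_alongPerm_mk hτ, FreeGroup.mk_toWord]
  rfl

end FreeGroup

/-! ### Bernoulli shifts -/

section Independence

variable {ι : Type*} {Ω : ι → Type*} {J L : Set ι} {U V : Set (∀ i, Ω i)}

lemma dependsOn_mem_inter (hUJ : DependsOn (· ∈ U) J) (hVL : DependsOn (· ∈ V) L) :
    DependsOn (· ∈ U ∩ V) (J ∪ L) := fun _ _ h =>
  congrArg₂ And (hUJ fun i hi => h i (Or.inl hi)) (hVL fun i hi => h i (Or.inr hi))

variable [∀ i, MeasurableSpace (Ω i)]

lemma measurableSet_iSup_comap_of_dependsOn [Nonempty (∀ i, Ω i)] (hU : MeasurableSet U)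
    (hJ : DependsOn (· ∈ U) J) :
    MeasurableSet[⨆ i ∈ J, MeasurableSpace.comap (fun ω : ∀ i, Ω i => ω i) inferInstance] U := by
  classical
  obtain ⟨ω₀⟩ := ‹Nonempty (∀ i, Ω i)›
  let restrict (ω : ∀ i, Ω i) (i : ι) : Ω i := if i ∈ J then ω i else ω₀ i
  have hU_eq : U = restrict ⁻¹' U :=
    Set.ext fun ω => iff_of_eq <| hJ fun i hi => (if_pos hi).symm
  rw [hU_eq]
  suffices hmeas : Measurable[⨆ i ∈ J, .comap (fun ω : ∀ i, Ω i => ω i) inferInstance] restrict from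
    hmeas hU
  refine @measurable_pi_lambda _ _ _ (_) _ _ fun i => ?_
  by_cases hi : i ∈ J
  · simp only [restrict, hi, if_true]
    exact (comap_measurable fun ω : ∀ i, Ω i => ω i).mono (le_iSup₂_of_le i hi le_rfl) le_rfl
  · simp only [restrict, hi, if_false]
    exact measurable_const

lemma measure_inter_of_dependsOn (P : ∀ i, Measure (Ω i)) [∀ i, IsProbabilityMeasure (P i)]
    (hU : MeasurableSet U) (hV : MeasurableSet V)
    (hUJ : DependsOn (· ∈ U) J) (hVL : DependsOn (· ∈ V) L) (hJL : Disjoint J L) :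
    Measure.infinitePi P (U ∩ V) = Measure.infinitePi P U * Measure.infinitePi P V := by
  have := (Measure.infinitePi P).nonempty_of_neZero
  have hindep : iIndep (fun i => MeasurableSpace.comap (fun ω : ∀ i, Ω i => ω i) inferInstance)
      (Measure.infinitePi P) :=
    iIndepFun_infinitePi (X := fun _ => id) fun _ => measurable_id
  exact (Indep_iff _ _ _).1
    (indep_iSup_of_disjoint (fun i => (measurable_pi_apply i).comap_le) hindep hJL) _ _
    (measurableSet_iSup_comap_of_dependsOn hU hUJ) (measurableSet_iSup_comap_of_dependsOn hV hVL)

end Independence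

lemma PMP.measureReal_inter_preimage_act {G X : Type*} [Group G] [MeasurableSpace X]
    {μ : Measure X} (f : PMP G X μ) {U V : Set X} (hU : MeasurableSet U) (hV : MeasurableSet V)
    (s : G) : μ.real (U ∩ f.act s ⁻¹' V) = μ.real (V ∩ f.act s⁻¹ ⁻¹' U) := by
  rw [measureReal_def, measureReal_def, ← (f.preserves s⁻¹).measure_preimage
    (hU.inter (f.measurable s hV)).nullMeasurableSet, preimage_inter, inter_comm, ← preimage_comp]
  congr 3
  ext x
  simp

lemma tendsto_measureReal_inter_of_generateFrom {Ω ι : Type*} {m : MeasurableSpace Ω}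
    {μ : Measure Ω} [IsProbabilityMeasure μ] {l : Filter ι} {W : ι → Set Ω} {w : ℝ}
    (hW : ∀ s, MeasurableSet (W s)) (hw : ∀ s, μ.real (W s) = w) {S : Set (Set Ω)}
    (hS : m = MeasurableSpace.generateFrom S) (hpi : IsPiSystem S)
    (hbasic : ∀ U ∈ S, Tendsto (fun s => μ.real (U ∩ W s)) l (𝓝 (μ.real U * w)))
    {U : Set Ω} (hU : MeasurableSet U) :
    Tendsto (fun s => μ.real (U ∩ W s)) l (𝓝 (μ.real U * w)) := by
  induction U, hU using MeasurableSpace.induction_on_inter hS hpi with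
  | empty => simpa using tendsto_const_nhds
  | basic U hU => exact hbasic U hU
  | compl U hU ih =>
    have hcompl (s) : μ.real (Uᶜ ∩ W s) = w - μ.real (U ∩ W s) := by
      rw [← hw s, ← measureReal_inter_add_sdiff (s := W s) hU, inter_comm (W s) U, Set.sdiff_eq,
        inter_comm (W s)]
      ring
    simp only [hcompl, probReal_compl_eq_one_sub hU, sub_mul, one_mul]
    exact ih.const_sub w
  | iUnion U hdisj hU ih =>
    have hsum (A : Set Ω) (hA : MeasurableSet A) :
        HasSum (fun i => μ.real (U i ∩ A)) (μ.real ((⋃ i, U i) ∩ A)) := by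
      have hmeasure := measure_iUnion (μ := μ)
        (fun i j hij => (hdisj hij).mono inter_subset_left inter_subset_left)
        fun i => (hU i).inter hA
      rw [iUnion_inter, measureReal_def, hmeasure,
        ENNReal.tsum_toReal_eq fun _ => measure_ne_top _ _]
      exact ENNReal.hasSum_toReal (hmeasure ▸ measure_ne_top _ _)
    have huniv := hsum univ .univ
    simp only [inter_univ] at huniv
    simp_rw [← (hsum _ (hW _)).tsum_eq, ← huniv.tsum_eq, ← tsum_mul_right]
    refine tendsto_tsum_of_dominated_convergence huniv.summable ih (.of_forall fun s i => ?_)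
    rw [Real.norm_of_nonneg measureReal_nonneg]
    exact measureReal_mono inter_subset_left

lemma exists_finset_dependsOn_of_mem_measurableCylinders {ι : Type*} {Ω : ι → Type*}
    [∀ i, MeasurableSpace (Ω i)] {U : Set (∀ i, Ω i)} (hU : U ∈ measurableCylinders Ω) :
    ∃ E : Finset ι, DependsOn (· ∈ U) (E : Set ι) := by
  obtain ⟨E, S, -, rfl⟩ := (mem_measurableCylinders _).1 hU
  exact ⟨E, fun ω ω' h => congrArg (· ∈ S) (E.dependsOn_restrict h)⟩

section Labels

variable {Γ ι K : Type*}

lemma dependsOn_label_eq (e : Γ × ι) (s : K) :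
    DependsOn (· ∈ {ω : Γ × ι → K | ω e = s}) {e} :=
  fun _ _ h => congrArg (· = s) (h e rfl)

variable [MeasurableSpace K]

/-- The law of a random labelling of `Γ × ι` with independent labels, the one at `(γ, i)` having
law `law i`. -/
noncomputable def labelMeasure (Γ : Type*) (law : ι → Measure K)
    [∀ i, IsProbabilityMeasure (law i)] : Measure (Γ × ι → K) :=
  Measure.infinitePi fun e => law e.2

instance (law : ι → Measure K) [∀ i, IsProbabilityMeasure (law i)] :
    IsProbabilityMeasure (labelMeasure Γ law) :=
  inferInstanceAs (IsProbabilityMeasure (Measure.infinitePi _))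

lemma measurableSet_label_eq [MeasurableSingletonClass K] (e : Γ × ι) (s : K) :
    MeasurableSet {ω : Γ × ι → K | ω e = s} :=
  (measurable_pi_apply e : Measurable fun ω : Γ × ι → K => ω e) (measurableSet_singleton s)

variable (law : ι → Measure K) [∀ i, IsProbabilityMeasure (law i)]

lemma labelMeasure_label_eq [MeasurableSingletonClass K] (e : Γ × ι) (s : K) :
    labelMeasure Γ law {ω | ω e = s} = law e.2 {s} :=
  (measurePreserving_eval_infinitePi (fun e : Γ × ι => law e.2) e).measure_preimage
    (measurableSet_singleton s).nullMeasurableSet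

lemma labelMeasure_inter_label_eq [MeasurableSingletonClass K] {U : Set (Γ × ι → K)}
    (hU : MeasurableSet U) {D : Set (Γ × ι)} (hUD : DependsOn (· ∈ U) D) {e : Γ × ι} (he : e ∉ D)
    (s : K) :
    labelMeasure Γ law (U ∩ {ω | ω e = s}) = labelMeasure Γ law U * law e.2 {s} := by
  rw [← labelMeasure_label_eq]
  exact measure_inter_of_dependsOn _ hU (measurableSet_label_eq e s) hUD (dependsOn_label_eq e s)
    (disjoint_singleton_right.2 he)

end Labels

section Shift

variable {Γ ι K : Type*} [Group Γ]

/-- The shift of a labelling `ω` of `Γ × ι`: `γ` acts on the first coordinate by right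
translation. -/
def shift (γ : Γ) (ω : Γ × ι → K) : Γ × ι → K := fun e => ω (e.1 * γ, e.2)

lemma shift_one (ω : Γ × ι → K) : shift 1 ω = ω := funext fun e => by simp [shift]

lemma shift_mul (γ γ' : Γ) (ω : Γ × ι → K) : shift (γ * γ') ω = shift γ (shift γ' ω) :=
  funext fun e => by simp [shift, mul_assoc]

variable [MeasurableSpace K]

lemma measurable_shift (γ : Γ) : Measurable (shift (ι := ι) (K := K) γ) :=
  measurable_pi_lambda _ fun _ => measurable_pi_apply _

/-- The Bernoulli shift of `Γ` over independent labels with laws `law i`. -/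
noncomputable def bernoulliShift (Γ : Type*) [Group Γ] (law : ι → Measure K)
    [∀ i, IsProbabilityMeasure (law i)] : PMP Γ (Γ × ι → K) (labelMeasure Γ law) where
  act := shift
  measurable := measurable_shift
  preserves γ := by
    refine ⟨measurable_shift γ, ?_⟩
    have hinj : Function.Injective fun e : Γ × ι => (e.1 * γ, e.2) :=
      (mul_left_injective γ).prodMap Function.injective_id
    exact Measure.map_infinitePi_infinitePi_of_inj hinj
  act_one := shift_one
  act_mul := shift_mul

variable (law : ι → Measure K) [∀ i, IsProbabilityMeasure (law i)]

lemma eventually_measure_inter_preimage_shift {U V : Set (Γ × ι → K)} (hU : MeasurableSet U)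
    (hV : MeasurableSet V) {E F : Finset (Γ × ι)} (hUE : DependsOn (· ∈ U) (E : Set (Γ × ι)))
    (hVF : DependsOn (· ∈ V) (F : Set (Γ × ι))) :
    ∀ᶠ s in cofinite, labelMeasure Γ law (U ∩ shift s ⁻¹' V) =
      labelMeasure Γ law U * labelMeasure Γ law V := by
  classical
  let returns : Finset Γ := (E ×ˢ F).image fun q => q.2.1⁻¹ * q.1.1
  filter_upwards [returns.finite_toSet.compl_mem_cofinite] with s hs
  rw [← ((bernoulliShift Γ law).preserves s).measure_preimage hV.nullMeasurableSet]
  refine measure_inter_of_dependsOn _ hU (measurable_shift s hV) hUE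
    (L := (fun e : Γ × ι => (e.1 * s, e.2)) '' F)
    (fun ω ω' h => hVF fun e he => h _ (mem_image_of_mem _ he)) ?_
  rw [Set.disjoint_left]
  rintro _ he ⟨e', he', rfl⟩
  refine hs (Finset.mem_image.2 ⟨(_, e'), Finset.mem_product.2 ⟨he, he'⟩, ?_⟩)
  exact inv_mul_cancel_left _ _

lemma tendsto_measureReal_inter_preimage_shift {U V : Set (Γ × ι → K)} (hU : MeasurableSet U)
    (hV : MeasurableSet V) :
    Tendsto (fun s => (labelMeasure Γ law).real (U ∩ shift s ⁻¹' V)) cofinite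
      (𝓝 ((labelMeasure Γ law).real U * (labelMeasure Γ law).real V)) := by
  let Mixing (U V : Set (Γ × ι → K)) : Prop :=
    Tendsto (fun s => (labelMeasure Γ law).real (U ∩ shift s ⁻¹' V)) cofinite
      (𝓝 ((labelMeasure Γ law).real U * (labelMeasure Γ law).real V))
  have hcylinder {U V} (hU : U ∈ measurableCylinders fun _ : Γ × ι => K)
      (hV : V ∈ measurableCylinders fun _ : Γ × ι => K) : Mixing U V := by
    obtain ⟨E, hE⟩ := exists_finset_dependsOn_of_mem_measurableCylinders hU
    obtain ⟨F, hF⟩ := exists_finset_dependsOn_of_mem_measurableCylinders hV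
    refine tendsto_const_nhds.congr' ?_
    filter_upwards [eventually_measure_inter_preimage_shift law (.of_mem_measurableCylinders hU)
      (.of_mem_measurableCylinders hV) hE hF] with s hs
    rw [measureReal_def, measureReal_def, measureReal_def, ← ENNReal.toReal_mul, hs]
  have hsymm {U V} (hU : MeasurableSet U) (hV : MeasurableSet V) (h : Mixing U V) :
      Mixing V U := by
    refine ((mul_comm _ _ : _ = (labelMeasure Γ law).real V * _) ▸
      h.comp (inv_injective (G := Γ)).tendsto_cofinite).congr fun s => ?_
    exact ((bernoulliShift Γ law).measureReal_inter_preimage_act hV hU s).symm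
  have hextend {V} (hV : MeasurableSet V)
      (h : ∀ U ∈ measurableCylinders fun _ : Γ × ι => K, Mixing U V) {U} (hU : MeasurableSet U) :
      Mixing U V :=
    tendsto_measureReal_inter_of_generateFrom (fun s => measurable_shift s hV)
      (fun s => congrArg ENNReal.toReal
        (((bernoulliShift Γ law).preserves s).measure_preimage hV.nullMeasurableSet))
      generateFrom_measurableCylinders.symm isPiSystem_measurableCylinders h hU
  exact hsymm hV hU <| hextend hU (fun V' hV' => hsymm hU (.of_mem_measurableCylinders hV') <|
    hextend (.of_mem_measurableCylinders hV') (fun U' hU' => hcylinder hU' hV') hU) hV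

lemma tendsto_measure_inter_preimage_shift {U V : Set (Γ × ι → K)} (hU : MeasurableSet U)
    (hV : MeasurableSet V) :
    Tendsto (fun s => labelMeasure Γ law (U ∩ shift s ⁻¹' V)) cofinite
      (𝓝 (labelMeasure Γ law U * labelMeasure Γ law V)) := by
  rw [← ENNReal.tendsto_toReal_iff (fun _ => measure_ne_top _ _) (by finiteness),
    ENNReal.toReal_mul]
  exact tendsto_measureReal_inter_preimage_shift law hU hV

end Shift

/-! ### Cycles in multigraphs -/

section Multigraph

variable {V E : Type*}

/-- Adjacency of `a` and `b` through an edge in `A`, in the multigraph whose edge `e` has the pair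
of endpoints `ends e`. -/
def LinkedThrough (ends : E → Sym2 V) (A : Set E) (a b : V) : Prop :=
  ∃ e ∈ A, ends e = s(a, b)

/-- There is a trail of `k` pairwise distinct edges in `A` from `a` to `o`. -/
def Trail (ends : E → Sym2 V) (o : V) : ℕ → Set E → V → Prop
  | 0, _, a => a = o
  | k + 1, A, a => ∃ e ∈ A, ∃ b, ends e = s(a, b) ∧ Trail ends o k (A \ {e}) b

/-- The edge `e` lies on a cycle of which it is an edge of highest level. -/
def ClosesCycle {L : Type*} [LE L] (ends : E → Sym2 V) (lvl : E → L) (e : E) : Prop :=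
  ∃ a b, ends e = s(a, b) ∧
    Relation.ReflTransGen (LinkedThrough ends {e' | lvl e' ≤ lvl e ∧ e' ≠ e}) a b

variable {ends : E → Sym2 V} {o : V} {A B : Set E}

instance LinkedThrough.symm : Std.Symm (LinkedThrough ends A) where
  symm _ _ := fun ⟨e, he, hab⟩ => ⟨e, he, hab.trans Sym2.eq_swap⟩

lemma Trail.mono {k : ℕ} (hAB : A ⊆ B) {a : V} (h : Trail ends o k A a) :
    Trail ends o k B a := by
  induction k generalizing A B a with
  | zero => exact h
  | succ k ih =>
    obtain ⟨e, he, b, hab, hb⟩ := h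
    exact ⟨e, hAB he, b, hab, ih (sdiff_subset_sdiff_left hAB) hb⟩

lemma Trail.avoids_or_exists_trail {k : ℕ} {a : V} (h : Trail ends o k A a) (e : E) :
    Trail ends o k (A \ {e}) a ∨ ∀ b ∈ ends e, ∃ j, Trail ends o j A b := by
  induction k generalizing A a with
  | zero => exact Or.inl h
  | succ k ih =>
    obtain ⟨e', he', c, hac, hc⟩ := id h
    by_cases hee' : e' = e
    · subst hee'
      refine Or.inr fun b hb => ?_
      rw [hac, Sym2.mem_iff] at hb
      rcases hb with rfl | rfl
      · exact ⟨_, h⟩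
      · exact ⟨k, hc.mono sdiff_subset⟩
    · refine (ih hc).imp (fun havoid => ⟨e', ⟨he', hee'⟩, c, hac, ?_⟩) fun hvisit b hb => ?_
      · rwa [sdiff_sdiff_comm]
      · obtain ⟨j, hj⟩ := hvisit b hb
        exact ⟨j, hj.mono sdiff_subset⟩

lemma exists_trail_of_reflTransGen {a : V}
    (h : Relation.ReflTransGen (LinkedThrough ends A) a o) : ∃ k, Trail ends o k A a := by
  induction h using Relation.ReflTransGen.head_induction_on with
  | refl => exact ⟨0, rfl⟩
  | @head a b hab _ ih =>
    obtain ⟨e, he, hends⟩ := hab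
    obtain ⟨k, hk⟩ := ih
    rcases hk.avoids_or_exists_trail e with havoid | hvisit
    · exact ⟨k + 1, e, he, b, hends, havoid⟩
    · exact hvisit a (hends ▸ Sym2.mem_mk_left a b)

lemma ClosesCycle.map {V' E' L : Type*} [LE L] {ends' : E' → Sym2 V'} {lvl : E → L}
    {lvl' : E' → L} (φ : V → V') {ψ : E → E'} (hψ : ψ.Injective)
    (hends : ∀ e, ends' (ψ e) = (ends e).map φ) (hlvl : ∀ e, lvl' (ψ e) = lvl e) {e : E}
    (h : ClosesCycle ends lvl e) : ClosesCycle ends' lvl' (ψ e) := by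
  obtain ⟨a, b, hab, hreach⟩ := h
  refine ⟨φ a, φ b, by rw [hends, hab, Sym2.map_mk], hreach.lift φ ?_⟩
  rintro c d ⟨e', ⟨hle, hne⟩, hcd⟩
  exact ⟨ψ e', ⟨by simpa only [hlvl] using hle, hψ.ne hne⟩, by rw [hends, hcd, Sym2.map_mk]⟩

lemma walk_ne_of_not_closesCycle {L : Type*} [LinearOrder L] {lvl : E → L} {v : ℕ → V}
    {edge : ℕ → E} {k : ℕ} (hends : ∀ i < k, ends (edge i) = s(v i, v (i + 1)))
    (hreduced : ∀ i, i + 1 < k → edge i ≠ edge (i + 1))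
    (hacyclic : ∀ i < k, ¬ ClosesCycle ends lvl (edge i)) (n i : ℕ) (hik : i + n < k) :
    v i ≠ v (i + n + 1) := by
  induction n using Nat.strong_induction_on generalizing i with
  | _ n ih =>
  intro hclosed
  have hsimple {l m : ℕ} (hil : i ≤ l) (hlm : l < m) (hm : m ≤ i + n) : v l ≠ v m := by
    obtain ⟨d, rfl⟩ := Nat.exists_eq_add_of_lt hlm
    exact ih d (by omega) l (by omega)
  have hdistinct {l m : ℕ} (hil : i ≤ l) (hlm : l < m) (hm : m ≤ i + n) : edge l ≠ edge m := by
    intro heq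
    have hpair := (hends l (by omega)).symm.trans ((congrArg ends heq).trans (hends m (by omega)))
    rcases Sym2.eq_iff.1 hpair with ⟨h, -⟩ | ⟨-, h⟩
    · exact hsimple hil hlm hm h
    · rcases Nat.eq_or_lt_of_le hlm with hsucc | hlt
      · exact hreduced l (by omega) (heq.trans (congrArg edge hsucc.symm))
      · exact hsimple (hil.trans l.le_succ) hlt hm h
  obtain ⟨m, hm, hmax⟩ := Finset.exists_max_image (Finset.Icc i (i + n)) (fun l => lvl (edge l))
    ⟨i, by simp⟩
  rw [Finset.mem_Icc] at hm
  have hlink {l : ℕ} (hl : l ∈ Finset.Icc i (i + n)) (hlm : l ≠ m) :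
      LinkedThrough ends {e | lvl e ≤ lvl (edge m) ∧ e ≠ edge m} (v l) (v (l + 1)) := by
    refine ⟨edge l, ⟨hmax l hl, ?_⟩, hends l ?_⟩ <;> rw [Finset.mem_Icc] at hl
    · rcases hlm.lt_or_gt with h | h
      · exact hdistinct hl.1 h hm.2
      · exact (hdistinct hm.1 h hl.2).symm
    · omega
  have hpath {a b : ℕ} (hab : a ≤ b) (h : ∀ l ∈ Ico a b, l ∈ Finset.Icc i (i + n) ∧ l ≠ m) :
      Relation.ReflTransGen (LinkedThrough ends {e | lvl e ≤ lvl (edge m) ∧ e ≠ edge m})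
        (v a) (v b) :=
    (reflTransGen_of_succ_of_le (fun l l' => LinkedThrough ends _ (v l) (v l'))
      (fun l hl => hlink (h l hl).1 (h l hl).2) hab).lift v fun _ _ => id
  have hback : Relation.ReflTransGen _ (v (m + 1)) (v m) :=
    (hpath (a := m + 1) (b := i + n + 1) (by omega) fun l hl => by
      simp only [mem_Ico, Finset.mem_Icc] at hl ⊢; omega).trans <| hclosed ▸
    hpath hm.1 fun l hl => by simp only [mem_Ico, Finset.mem_Icc] at hl ⊢; omega
  exact hacyclic m (by omega) ⟨v (m + 1), v m, (hends m (by omega)).trans Sym2.eq_swap, hback⟩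

end Multigraph

lemma measurableSet_reflTransGen {Ω V : Type*} [MeasurableSpace Ω] [Countable V]
    {R : Ω → V → V → Prop} (hR : ∀ a b, MeasurableSet {ω | R ω a b}) (a b : V) :
    MeasurableSet {ω | Relation.ReflTransGen (R ω) a b} := by
  have hchain (l : List V) (c : V) : MeasurableSet {ω | (c :: l).IsChain (R ω)} := by
    induction l generalizing c with
    | nil => simp
    | cons d l ih =>
      simp only [List.isChain_cons_cons]
      exact (hR c d).inter (ih d)
  have hreach : {ω | Relation.ReflTransGen (R ω) a b} =
      ⋃ l : List V, {ω | (a :: l).IsChain (R ω) ∧ (a :: l).getLast (l.cons_ne_nil a) = b} := by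
    ext ω
    rw [mem_iUnion]
    exact ⟨List.exists_isChain_cons_of_relationReflTransGen,
      fun ⟨l, hl, hlast⟩ => List.relationReflTransGen_of_exists_isChain_cons l hl hlast⟩
  rw [hreach]
  exact .iUnion fun l => (hchain l a).inter (.const _)

/-! ### Cycles among random edges -/

section RandomEdges

variable {Γ : Type*} [Group Γ]

/-- The endpoints of the edge `(γ, i)` of the multigraph on `Γ` encoded by the labelling `ω`: it
joins `γ` to `ω (γ, i) * γ`. -/
def edgeEnds {ι : Type*} (ω : Γ × ι → Γ) (e : Γ × ι) : Sym2 Γ := s(e.1, ω e * e.1)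

lemma closesCycle_shift {ω : Γ × ℕ → Γ} {γ : Γ} {n : ℕ}
    (h : ClosesCycle (edgeEnds ω) Prod.snd (γ, n)) :
    ClosesCycle (edgeEnds (shift γ ω)) Prod.snd ((1 : Γ), n) := by
  have hψ : Function.Injective fun e : Γ × ℕ => (e.1 * γ⁻¹, e.2) :=
    (mul_left_injective γ⁻¹).prodMap Function.injective_id
  have hends (e : Γ × ℕ) :
      edgeEnds (shift γ ω) (e.1 * γ⁻¹, e.2) = (edgeEnds ω e).map (· * γ⁻¹) := by
    simp [edgeEnds, shift, mul_assoc]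
  simpa only [mul_inv_cancel] using
    h.map (lvl' := Prod.snd) (· * γ⁻¹) hψ hends fun _ => rfl

lemma dependsOn_closesCycle (γ : Γ) (n : ℕ) :
    DependsOn (fun ω : Γ × ℕ → Γ => ClosesCycle (edgeEnds ω) Prod.snd (γ, n)) {e | e.2 ≤ n} := by
  intro ω ω' h
  have hends (e : Γ × ℕ) (he : e.2 ≤ n) : edgeEnds ω e = edgeEnds ω' e := by
    rw [edgeEnds, edgeEnds, h e he]
  have hlinked : LinkedThrough (edgeEnds ω) {e | e.2 ≤ n ∧ e ≠ (γ, n)} =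
      LinkedThrough (edgeEnds ω') {e | e.2 ≤ n ∧ e ≠ (γ, n)} := by
    ext a b
    exact exists_congr fun e => and_congr_right fun he => by rw [hends e he.1]
  simp only [ClosesCycle, hends (γ, n) le_rfl, hlinked]

lemma measurableSet_closesCycle [Countable Γ] [MeasurableSpace Γ] [MeasurableSingletonClass Γ]
    (e : Γ × ℕ) : MeasurableSet {ω : Γ × ℕ → Γ | ClosesCycle (edgeEnds ω) Prod.snd e} := by
  have hends (e : Γ × ℕ) (a b : Γ) :
      MeasurableSet {ω : Γ × ℕ → Γ | edgeEnds ω e = s(a, b)} :=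
    (measurable_pi_apply e : Measurable fun ω : Γ × ℕ → Γ => ω e)
      (to_countable {s | s(e.1, s * e.1) = s(a, b)}).measurableSet
  have hlinked (A : Set (Γ × ℕ)) (a b : Γ) :
      MeasurableSet {ω : Γ × ℕ → Γ | LinkedThrough (edgeEnds ω) A a b} := by
    simp only [LinkedThrough, ofPred_exists]
    exact .iUnion fun e' => (MeasurableSet.const _).inter (hends e' a b)
  simp only [ClosesCycle, ofPred_exists]
  exact .iUnion fun a => .iUnion fun b =>
    (hends e a b).inter (measurableSet_reflTransGen (hlinked _) a b)

/-- An upper bound for the expected number of trails of `k` edges of level at most `n` from `a`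
to `1`, when the labels of level `i` are independent of law `q i`. -/
noncomputable def trailWeight (q : ℕ → PMF Γ) (n : ℕ) : ℕ → Γ → ℝ≥0∞
  | 0, a => Set.indicator {1} 1 a
  | k + 1, a => ∑ i ∈ Finset.range (n + 1), ∑' b, 2 * (q i (b * a⁻¹) * trailWeight q n k b)

lemma IsDecayingWalk.tsum_mul_trailWeight_le {p : ℕ → PMF Γ} {ρ : ℝ≥0∞}
    (hp : IsDecayingWalk p ρ) {m : ℕ → ℕ}
    (hm : ∀ N, ∑ i ∈ Finset.range N, 2 * ρ ^ m i ≤ 1 / 2) (n k M : ℕ) :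
    ∑' a, p M a * trailWeight (fun i => p (m i)) n k a ≤ ρ ^ M * (1 / 2) ^ k := by
  set W := trailWeight (fun i => p (m i)) n with hW
  have hconv (M i : ℕ) (b : Γ) : ∑' a, p M a * p (m i) (b * a⁻¹) = p (m i + M) b := by
    rw [← hp.tsum_mul, ← (Equiv.divLeft b).tsum_eq fun s => p (m i) s * p M (s⁻¹ * b)]
    exact tsum_congr fun a => by simp [div_eq_mul_inv, mul_comm]
  induction k generalizing M with
  | zero =>
    rw [tsum_eq_single 1 fun a ha => by simp [hW, trailWeight, ha]]
    simpa [hW, trailWeight] using hp.le_pow M 1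
  | succ k ih =>
    calc ∑' a, p M a * W (k + 1) a
        = ∑ i ∈ Finset.range (n + 1), 2 * ∑' b, p (m i + M) b * W k b := by
          simp only [hW, trailWeight, Finset.mul_sum]
          rw [Summable.tsum_finsetSum fun _ _ => ENNReal.summable]
          refine Finset.sum_congr rfl fun i _ => ?_
          simp only [← hconv, ← ENNReal.tsum_mul_left, ← ENNReal.tsum_mul_right]
          rw [ENNReal.tsum_comm]
          exact tsum_congr fun b => tsum_congr fun a => by ring
      _ ≤ ∑ i ∈ Finset.range (n + 1), 2 * (ρ ^ (m i + M) * (1 / 2) ^ k) := by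
          gcongr with i
          exact ih _
      _ = (∑ i ∈ Finset.range (n + 1), 2 * ρ ^ m i) * (ρ ^ M * (1 / 2) ^ k) := by
          rw [Finset.sum_mul]
          exact Finset.sum_congr rfl fun i _ => by ring
      _ ≤ 1 / 2 * (ρ ^ M * (1 / 2) ^ k) := by gcongr; exact hm _
      _ = ρ ^ M * (1 / 2) ^ (k + 1) := by ring

variable [MeasurableSpace Γ] [MeasurableSingletonClass Γ]

lemma measure_inter_label_eq_inter_trail_le {q : ℕ → PMF Γ} {n k : ℕ}
    (htrail : ∀ (U : Set (Γ × ℕ → Γ)) (D : Set (Γ × ℕ)), MeasurableSet U → DependsOn (· ∈ U) D →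
      ∀ b, labelMeasure Γ (fun i => (q i).toMeasure)
          (U ∩ {ω | Trail (edgeEnds ω) 1 k ({e | e.2 ≤ n} \ D) b}) ≤
        labelMeasure Γ (fun i => (q i).toMeasure) U * trailWeight q n k b)
    {U : Set (Γ × ℕ → Γ)} (hU : MeasurableSet U) {D : Set (Γ × ℕ)} (hUD : DependsOn (· ∈ U) D)
    {e : Γ × ℕ} (he : e ∉ D) (s b : Γ) :
    labelMeasure Γ (fun i => (q i).toMeasure)
        ((U ∩ {ω | ω e = s}) ∩ {ω | Trail (edgeEnds ω) 1 k ({e | e.2 ≤ n} \ (D ∪ {e})) b}) ≤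
      labelMeasure Γ (fun i => (q i).toMeasure) U * (q e.2 s * trailWeight q n k b) := by
  refine (htrail _ _ (hU.inter (measurableSet_label_eq e s))
    (dependsOn_mem_inter hUD (dependsOn_label_eq e s)) b).trans_eq ?_
  rw [labelMeasure_inter_label_eq _ hU hUD he,
    PMF.toMeasure_apply_singleton _ _ (measurableSet_singleton s), mul_assoc]

variable [Countable Γ]

lemma measure_inter_trail_le {q : ℕ → PMF Γ} (hq : ∀ i s, q i s⁻¹ = q i s) (n k : ℕ)
    (U : Set (Γ × ℕ → Γ)) (D : Set (Γ × ℕ)) (hU : MeasurableSet U) (hUD : DependsOn (· ∈ U) D)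
    (a : Γ) :
    labelMeasure Γ (fun i => (q i).toMeasure)
        (U ∩ {ω | Trail (edgeEnds ω) 1 k ({e | e.2 ≤ n} \ D) a}) ≤
      labelMeasure Γ (fun i => (q i).toMeasure) U * trailWeight q n k a := by
  induction k generalizing U D a with
  | zero => by_cases ha : a = 1 <;> simp [Trail, trailWeight, ha]
  | succ k ih =>
    set β := labelMeasure Γ fun i => (q i).toMeasure
    let via (e : Γ × ℕ) (s b : Γ) : Set (Γ × ℕ → Γ) := {ω | e ∉ D ∧
      ω ∈ (U ∩ {ω | ω e = s}) ∩ {ω | Trail (edgeEnds ω) 1 k ({e | e.2 ≤ n} \ (D ∪ {e})) b}}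
    have hvia (e : Γ × ℕ) (s b : Γ) : β (via e s b) ≤ β U * (q e.2 s * trailWeight q n k b) := by
      by_cases he : e ∈ D
      · simp [via, he]
      · exact (measure_mono fun ω hω => hω.2).trans
          (measure_inter_label_eq_inter_trail_le ih hU hUD he s b)
    have hcover : U ∩ {ω | Trail (edgeEnds ω) 1 (k + 1) ({e | e.2 ≤ n} \ D) a} ⊆
        ⋃ i ∈ Finset.range (n + 1), ⋃ b, via (a, i) (b * a⁻¹) b ∪ via (b, i) (a * b⁻¹) b := by
      rintro ω ⟨hωU, ⟨c, i⟩, ⟨hi, hD⟩, b, hends, htrail⟩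
      rw [sdiff_sdiff] at htrail
      refine mem_iUnion₂.2 ⟨i, Finset.mem_range_succ_iff.2 hi, mem_iUnion.2 ⟨b, ?_⟩⟩
      rcases Sym2.eq_iff.1 hends with ⟨rfl, hb⟩ | ⟨rfl, ha⟩
      · exact Or.inl ⟨hD, ⟨hωU, eq_mul_inv_of_mul_eq hb⟩, htrail⟩
      · exact Or.inr ⟨hD, ⟨hωU, eq_mul_inv_of_mul_eq ha⟩, htrail⟩
    calc β (U ∩ {ω | Trail (edgeEnds ω) 1 (k + 1) ({e | e.2 ≤ n} \ D) a})
        ≤ ∑ i ∈ Finset.range (n + 1), ∑' b,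
            β (via (a, i) (b * a⁻¹) b ∪ via (b, i) (a * b⁻¹) b) :=
          (measure_mono hcover).trans <| (measure_biUnion_finset_le _ _).trans <|
            Finset.sum_le_sum fun i _ => measure_iUnion_le _
      _ ≤ ∑ i ∈ Finset.range (n + 1), ∑' b, β U * (2 * (q i (b * a⁻¹) * trailWeight q n k b)) := by
          gcongr with i _ b
          refine (measure_union_le _ _).trans ((add_le_add (hvia _ _ _) (hvia _ _ _)).trans_eq ?_)
          rw [← hq i (a * b⁻¹), mul_inv_rev, inv_inv]
          ring
      _ = β U * trailWeight q n (k + 1) a := by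
          simp only [trailWeight, ENNReal.tsum_mul_left, Finset.mul_sum]

lemma measure_closesCycle_le_tsum {q : ℕ → PMF Γ} (hq : ∀ i s, q i s⁻¹ = q i s) (n : ℕ) :
    labelMeasure Γ (fun i => (q i).toMeasure)
        {ω | ClosesCycle (edgeEnds ω) Prod.snd ((1 : Γ), n)} ≤
      ∑' k, ∑' s, q n s * trailWeight q n k s := by
  set β := labelMeasure Γ fun i => (q i).toMeasure
  have hcover : {ω | ClosesCycle (edgeEnds ω) Prod.snd ((1 : Γ), n)} ⊆
      ⋃ k, ⋃ s, (univ ∩ {ω | ω (1, n) = s}) ∩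
        {ω | Trail (edgeEnds ω) 1 k ({e | e.2 ≤ n} \ (∅ ∪ {(1, n)})) s} := by
    rintro ω ⟨a, b, hends, hreach⟩
    have hreach' : Relation.ReflTransGen (LinkedThrough (edgeEnds ω)
        ({e | e.2 ≤ n} \ (∅ ∪ {(1, n)}))) (ω (1, n)) 1 := by
      rw [empty_union]
      rcases Sym2.eq_iff.1 hends with ⟨rfl, rfl⟩ | ⟨rfl, rfl⟩
      · simpa only [mul_one] using! Std.Symm.symm _ _ hreach
      · simpa only [mul_one] using! hreach
    obtain ⟨k, hk⟩ := exists_trail_of_reflTransGen hreach'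
    exact mem_iUnion₂.2 ⟨k, ω (1, n), ⟨mem_univ _, rfl⟩, hk⟩
  refine (measure_mono hcover).trans <| (measure_iUnion_le _).trans <|
    ENNReal.tsum_le_tsum fun k => (measure_iUnion_le _).trans <| ENNReal.tsum_le_tsum fun s => ?_
  refine (measure_inter_label_eq_inter_trail_le (measure_inter_trail_le hq n k) .univ
    (fun _ _ _ => rfl) (notMem_empty _) s s).trans_eq ?_
  rw [measure_univ, one_mul]

lemma IsDecayingWalk.measure_closesCycle_le {p : ℕ → PMF Γ} {ρ : ℝ≥0∞}
    (hp : IsDecayingWalk p ρ) {m : ℕ → ℕ}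
    (hm : ∀ N, ∑ i ∈ Finset.range N, 2 * ρ ^ m i ≤ 1 / 2) (n : ℕ) :
    labelMeasure Γ (fun i => (p (m i)).toMeasure)
        {ω | ClosesCycle (edgeEnds ω) Prod.snd ((1 : Γ), n)} ≤ 2 * ρ ^ m n :=
  calc _ ≤ ∑' k, ∑' s, p (m n) s * trailWeight (fun i => p (m i)) n k s :=
        measure_closesCycle_le_tsum (fun i => hp.apply_inv (m i)) n
    _ ≤ ∑' k, ρ ^ m n * (1 / 2) ^ k :=
        ENNReal.tsum_le_tsum fun k => hp.tsum_mul_trailWeight_le hm n k (m n)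
    _ = 2 * ρ ^ m n := by
        rw [ENNReal.tsum_mul_left, ENNReal.tsum_geometric, one_div, ENNReal.one_sub_inv_two,
          inv_inv, mul_comm]

lemma exists_sum_two_mul_pow_add_le {ρ : ℝ≥0∞} (hρ : ρ < 1) :
    ∃ n₀ : ℕ, ∀ N, ∑ i ∈ Finset.range N, 2 * ρ ^ (i + n₀) ≤ 1 / 2 := by
  have htop : (2 * (1 - ρ)⁻¹ : ℝ≥0∞) ≠ ⊤ :=
    ENNReal.mul_ne_top ENNReal.ofNat_ne_top (ENNReal.inv_ne_top.2 (tsub_pos_of_lt hρ).ne')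
  have htendsto : Tendsto (fun n : ℕ => 2 * (1 - ρ)⁻¹ * ρ ^ n) atTop (𝓝 0) := by
    simpa using ENNReal.Tendsto.const_mul
      (ENNReal.tendsto_pow_atTop_nhds_zero_of_lt_one hρ) (Or.inr htop)
  obtain ⟨n₀, hn₀⟩ :=
    (htendsto.eventually (gt_mem_nhds (show (0 : ℝ≥0∞) < 1 / 2 by simp))).exists
  refine ⟨n₀, fun N => (ENNReal.sum_le_tsum _).trans (le_of_eq_of_le ?_ hn₀.le)⟩
  simp only [pow_add, ENNReal.tsum_mul_left, ENNReal.tsum_mul_right, ENNReal.tsum_geometric,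
    mul_assoc]

end RandomEdges

/-! ### Greedy matchings -/

section Matching

variable {Γ : Type*} [Group Γ]

/-- The translate of `ω` that brings the far end `ω (1, n)` of the edge `(1, n)` to the origin. -/
def slide (n : ℕ) (ω : Γ × ℕ → Γ) : Γ × ℕ → Γ := shift (ω (1, n)) ω

lemma dependsOn_image_slide {n : ℕ} {M : Set (Γ × ℕ → Γ)}
    (hM : DependsOn (· ∈ M) {e | e.2 ≤ n}) : DependsOn (· ∈ slide n '' M) {e | e.2 ≤ n} := by
  have himp {ω ω' : Γ × ℕ → Γ} (h : ∀ e ∈ {e : Γ × ℕ | e.2 ≤ n}, ω e = ω' e)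
      (hω : ω ∈ slide n '' M) : ω' ∈ slide n '' M := by
    obtain ⟨z, hz, rfl⟩ := hω
    have hagree : ∀ e ∈ {e : Γ × ℕ | e.2 ≤ n}, z e = shift (z (1, n))⁻¹ ω' e := fun e he => by
      simp [shift, slide, ← h (e.1 * (z (1, n))⁻¹, e.2) he]
    refine ⟨_, (hM hagree).mp hz, ?_⟩
    rw [slide, ← hagree (1, n) (le_refl n), ← shift_mul, mul_inv_cancel, shift_one]
  exact fun ω ω' h => propext ⟨himp h, himp fun e he => (h e he).symm⟩

variable [Encodable Γ]

/-- The labellings for which, among all the edges of level `n` whose far end is that of `(1, n)`,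
the edge `(1, n)` carries the label with the smallest code. -/
def selected (n : ℕ) : Set (Γ × ℕ → Γ) :=
  {ω | ∀ t, Encodable.encode t < Encodable.encode (ω (1, n)) → ω (t⁻¹ * ω (1, n), n) ≠ t}

lemma injOn_slide_selected (n : ℕ) : InjOn (slide n) (selected n : Set (Γ × ℕ → Γ)) := by
  have hle {ω ω' : Γ × ℕ → Γ} (hω : ω ∈ selected n) (h : slide n ω = slide n ω') :
      Encodable.encode (ω (1, n)) ≤ Encodable.encode (ω' (1, n)) := by
    by_contra! hlt
    refine hω _ hlt ?_
    simpa [slide, shift] using congrFun h ((ω' (1, n))⁻¹, n)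
  intro ω hω ω' hω' h
  have hlabel : ω (1, n) = ω' (1, n) :=
    Encodable.encode_injective ((hle hω h).antisymm (hle hω' h.symm))
  have hback := congrArg (shift (ω (1, n))⁻¹) h
  rwa [slide, slide, ← hlabel, ← shift_mul, ← shift_mul, inv_mul_cancel, shift_one, shift_one]
    at hback

lemma compl_selected (n : ℕ) : (selected n : Set (Γ × ℕ → Γ))ᶜ =
    ⋃ (s : Γ) (t : Γ) (_ : Encodable.encode t < Encodable.encode s),
      {ω | ω (1, n) = s} ∩ {ω | ω (t⁻¹ * s, n) = t} := by
  ext ω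
  simp [selected]

lemma dependsOn_selected (n : ℕ) :
    DependsOn (· ∈ (selected n : Set (Γ × ℕ → Γ))) {e | e.2 = n} := by
  intro (ω : Γ × ℕ → Γ) (ω' : Γ × ℕ → Γ) h
  have hlevel (γ : Γ) : ω (γ, n) = ω' (γ, n) := h _ rfl
  simp only [selected, mem_ofPred_eq, hlevel]

/-- The labellings whose edge `(1, n)` enters the greedy matching that uses the edges with levels
in `N`: the edge is selected, it closes no cycle, and neither of its ends has been matched at an
earlier level. -/
def matched (N : Set ℕ) (n : ℕ) : Set (Γ × ℕ → Γ) :=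
  {ω | n ∈ N ∧ ω ∈ selected n ∧ ¬ ClosesCycle (edgeEnds ω) Prod.snd ((1 : Γ), n) ∧
    (∀ m, m < n → ω ∉ matched N m) ∧ ∀ m, m < n → slide n ω ∉ slide m '' matched N m}

/-- The labellings for which no edge of level `< n` leaving the origin is matched. -/
def freeSources (N : Set ℕ) (n : ℕ) : Set (Γ × ℕ → Γ) := ⋂ m < n, (matched N m)ᶜ

/-- The labellings for which no edge of level `< n` arriving at the origin is matched. -/
def freeTargets (N : Set ℕ) (n : ℕ) : Set (Γ × ℕ → Γ) := ⋂ m < n, (slide m '' matched N m)ᶜ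

variable {N : Set ℕ} {n : ℕ} {ω : Γ × ℕ → Γ}

lemma mem_matched : ω ∈ matched N n ↔ n ∈ N ∧ ω ∈ selected n ∧
    ¬ ClosesCycle (edgeEnds ω) Prod.snd ((1 : Γ), n) ∧ ω ∈ freeSources N n ∧
    slide n ω ∈ freeTargets N n := by
  rw [matched]
  simp only [freeSources, freeTargets, mem_iInter, mem_compl_iff, mem_ofPred_eq]

lemma matched_subset_selected (N : Set ℕ) (n : ℕ) :
    (matched N n : Set (Γ × ℕ → Γ)) ⊆ selected n := fun _ h => (mem_matched.1 h).2.1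

lemma pairwise_disjoint_matched (N : Set ℕ) :
    Pairwise (Function.onFun Disjoint fun n => (matched N n : Set (Γ × ℕ → Γ))) := by
  refine (pairwise_disjoint_on _).2 fun m n hmn => disjoint_right.2 fun ω hω => ?_
  exact mem_iInter₂.1 (mem_matched.1 hω).2.2.2.1 m hmn

lemma pairwise_disjoint_image_slide_matched (N : Set ℕ) :
    Pairwise (Function.onFun Disjoint fun n =>
      slide n '' (matched N n : Set (Γ × ℕ → Γ))) := by
  refine (pairwise_disjoint_on _).2 fun m n hmn => disjoint_right.2 ?_
  rintro _ ⟨ω, hω, rfl⟩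
  exact mem_iInter₂.1 (mem_matched.1 hω).2.2.2.2 m hmn

lemma dependsOn_biInter_compl {E K : Type*} {S : ℕ → Set (E × ℕ → K)}
    (hS : ∀ m < n, DependsOn (· ∈ S m) {e | e.2 ≤ m}) :
    DependsOn (· ∈ ⋂ m < n, (S m)ᶜ) {e | e.2 < n} := fun ω ω' h => by
  simp only [mem_iInter, mem_compl_iff]
  exact propext <| forall₂_congr fun m hm => not_congr <| iff_of_eq <|
    hS m hm fun e he => h e (lt_of_le_of_lt he hm)

lemma dependsOn_matched (N : Set ℕ) (n : ℕ) :
    DependsOn (· ∈ (matched N n : Set (Γ × ℕ → Γ))) {e | e.2 ≤ n} := by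
  induction n using Nat.strong_induction_on with
  | _ n ih =>
    intro ω ω' h
    have hslide (e : Γ × ℕ) (he : e.2 < n) : slide n ω e = slide n ω' e := by
      rw [slide, slide, h (1, n) (le_refl n)]
      exact h (_, e.2) he.le
    have hselected := dependsOn_selected n fun e (he : e.2 = n) => h e he.le
    have hcycle := dependsOn_closesCycle 1 n h
    have hsource := dependsOn_biInter_compl ih fun e (he : e.2 < n) => h e he.le
    have htarget := dependsOn_biInter_compl (fun m hm => dependsOn_image_slide (ih m hm)) hslide
    simp only [mem_matched, freeSources, freeTargets, hselected, hcycle, hsource, htarget]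

lemma dependsOn_freeSources (N : Set ℕ) (n : ℕ) :
    DependsOn (· ∈ (freeSources N n : Set (Γ × ℕ → Γ))) {e | e.2 < n} :=
  dependsOn_biInter_compl fun m _ => dependsOn_matched N m

lemma dependsOn_freeTargets (N : Set ℕ) (n : ℕ) :
    DependsOn (· ∈ (freeTargets N n : Set (Γ × ℕ → Γ))) {e | e.2 < n} :=
  dependsOn_biInter_compl fun m _ => dependsOn_image_slide (dependsOn_matched N m)

variable [MeasurableSpace Γ] [MeasurableSingletonClass Γ]

lemma measurable_slide (n : ℕ) : Measurable (slide n : (Γ × ℕ → Γ) → Γ × ℕ → Γ) :=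
  (bernoulliShift Γ fun _ => Measure.dirac 1).measurable_along (measurable_pi_apply (1, n))

lemma measurableSet_image_slide (n : ℕ) {M : Set (Γ × ℕ → Γ)} (hM : MeasurableSet M) :
    MeasurableSet (slide n '' M) :=
  (bernoulliShift Γ fun _ => Measure.dirac 1).measurableSet_image_along
    (measurable_pi_apply (1, n)) hM

lemma measurableSet_selected (n : ℕ) : MeasurableSet (selected n : Set (Γ × ℕ → Γ)) := by
  refine .of_compl (compl_selected (Γ := Γ) n ▸ ?_)
  exact .iUnion fun s => .iUnion fun t => .iUnion fun _ =>
    (measurableSet_label_eq _ _).inter (measurableSet_label_eq _ _)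

lemma measurableSet_matched (N : Set ℕ) (n : ℕ) :
    MeasurableSet (matched N n : Set (Γ × ℕ → Γ)) := by
  induction n using Nat.strong_induction_on with
  | _ n ih =>
    have heq : (matched N n : Set (Γ × ℕ → Γ)) = {_ω | n ∈ N} ∩ (selected n ∩
        ({ω | ClosesCycle (edgeEnds ω) Prod.snd ((1 : Γ), n)}ᶜ ∩
          (freeSources N n ∩ slide n ⁻¹' freeTargets N n))) := ext fun ω => mem_matched
    rw [heq]
    refine (MeasurableSet.const _).inter <| (measurableSet_selected n).inter <|
      (measurableSet_closesCycle _).compl.inter <| .inter ?_ (measurable_slide n ?_)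
    · exact .iInter fun m => .iInter fun hm => (ih m hm).compl
    · exact .iInter fun m => .iInter fun hm => (measurableSet_image_slide m (ih m hm)).compl

lemma measurableSet_freeSources (N : Set ℕ) (n : ℕ) :
    MeasurableSet (freeSources N n : Set (Γ × ℕ → Γ)) :=
  .iInter fun m => .iInter fun _ => (measurableSet_matched N m).compl

lemma measurableSet_freeTargets (N : Set ℕ) (n : ℕ) :
    MeasurableSet (freeTargets N n : Set (Γ × ℕ → Γ)) :=
  .iInter fun m => .iInter fun _ => (measurableSet_image_slide m (measurableSet_matched N m)).compl

variable (law : ℕ → Measure Γ) [∀ i, IsProbabilityMeasure (law i)]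

lemma measure_iUnion_image_slide_matched (N : Set ℕ) :
    labelMeasure Γ law (⋃ n, slide n '' matched N n) =
      labelMeasure Γ law (⋃ n, matched N n) := by
  rw [measure_iUnion (pairwise_disjoint_image_slide_matched N) fun n =>
      measurableSet_image_slide n (measurableSet_matched N n),
    measure_iUnion (pairwise_disjoint_matched N) (measurableSet_matched N)]
  exact tsum_congr fun n => (bernoulliShift Γ law).measure_image_along
    (measurable_pi_apply (1, n)) (measurableSet_matched N n)
    ((injOn_slide_selected n).mono (matched_subset_selected N n))

lemma measure_compl_selected_le (n : ℕ) :
    labelMeasure Γ law (selected n)ᶜ ≤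
      ∑' (s) (t), if Encodable.encode t < Encodable.encode s then law n {s} * law n {t} else 0 := by
  rw [compl_selected]
  refine (measure_iUnion_le _).trans <| ENNReal.tsum_le_tsum fun s =>
    (measure_iUnion_le _).trans <| ENNReal.tsum_le_tsum fun t => ?_
  split_ifs with hlt
  · have hne : (t⁻¹ * s, n) ∉ ({(1, n)} : Set (Γ × ℕ)) := by
      rintro heq
      rw [mem_singleton_iff, Prod.mk.injEq, inv_mul_eq_one] at heq
      exact hlt.ne (congrArg _ heq.1)
    rw [iUnion_congr_Prop (pq := iff_true_intro hlt) fun _ => rfl, iUnion_true,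
      labelMeasure_inter_label_eq law (measurableSet_label_eq _ _) (dependsOn_label_eq _ _) hne,
      labelMeasure_label_eq]
  · simp [hlt]

lemma half_le_measure_selected (n : ℕ) : 1 / 2 ≤ labelMeasure Γ law (selected n) := by
  have htotal : ∑' s : Γ, law n {s} = 1 := by
    have h := measure_eq_tsum_inter_preimage_singleton (law n) measurable_id MeasurableSet.univ
    simpa using h.symm
  let before (s t : Γ) : ℝ≥0∞ :=
    if Encodable.encode t < Encodable.encode s then law n {s} * law n {t} else 0
  have hcompl : labelMeasure Γ law (selected n)ᶜ * 2 ≤ 1 :=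
    calc labelMeasure Γ law (selected n)ᶜ * 2
        ≤ ∑' (s) (t), before s t + ∑' (t) (s), before s t := by
          rw [mul_two, ENNReal.tsum_comm (f := fun t s => before s t)]
          exact add_le_add (measure_compl_selected_le law n) (measure_compl_selected_le law n)
      _ = ∑' (s) (t), (before s t + before t s) := by simp only [ENNReal.tsum_add]
      _ ≤ ∑' (s) (t), law n {s} * law n {t} := by
          refine ENNReal.tsum_le_tsum fun s => ENNReal.tsum_le_tsum fun t => ?_
          rcases lt_trichotomy (Encodable.encode s) (Encodable.encode t) with h | h | h
          · simp [before, h, h.not_gt, mul_comm]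
          · simp [before, h]
          · simp [before, h, h.not_gt]
      _ = 1 := by simp only [ENNReal.tsum_mul_left, htotal, mul_one]
  rw [← compl_compl (selected n), prob_compl_eq_one_sub (measurableSet_selected n).compl]
  refine ENNReal.le_sub_of_add_le_left (measure_ne_top _ _) ?_
  calc labelMeasure Γ law (selected n)ᶜ + 1 / 2 ≤ 1 / 2 + 1 / 2 := by
        gcongr
        rwa [ENNReal.le_div_iff_mul_le (by simp) (by simp)]
    _ = 1 := ENNReal.add_halves 1

/-- The level-`n` labels are independent of the earlier stages of the matching. -/
lemma measure_free_inter_label_eq (N : Set ℕ) (n : ℕ) (s : Γ) :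
    labelMeasure Γ law
        (selected n ∩ (freeSources N n ∩ slide n ⁻¹' freeTargets N n) ∩ {ω | ω (1, n) = s}) =
      labelMeasure Γ law (freeSources N n ∩ shift s ⁻¹' freeTargets N n) *
        labelMeasure Γ law (selected n ∩ {ω | ω (1, n) = s}) := by
  have hset : selected n ∩ (freeSources N n ∩ slide n ⁻¹' freeTargets N n) ∩ {ω | ω (1, n) = s} =
      freeSources N n ∩ shift s ⁻¹' freeTargets N n ∩ (selected n ∩ {ω | ω (1, n) = s}) := by
    ext ω
    simp only [slide, mem_inter_iff, mem_preimage, mem_ofPred_eq]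
    constructor
    · rintro ⟨⟨hsel, hsource, htarget⟩, rfl⟩
      exact ⟨⟨hsource, htarget⟩, hsel, rfl⟩
    · rintro ⟨⟨hsource, htarget⟩, hsel, rfl⟩
      exact ⟨⟨hsel, hsource, htarget⟩, rfl⟩
  have hearlier : DependsOn (· ∈ freeSources N n ∩ shift s ⁻¹' freeTargets N n)
      {e : Γ × ℕ | e.2 < n} := by
    simpa only [union_self] using dependsOn_mem_inter (dependsOn_freeSources N n)
      (V := shift s ⁻¹' freeTargets N n) (L := {e | e.2 < n})
      fun ω ω' h => dependsOn_freeTargets N n fun e he => h (e.1 * s, e.2) he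
  have hlevel : DependsOn (· ∈ selected n ∩ {ω : Γ × ℕ → Γ | ω (1, n) = s}) {e | e.2 = n} := by
    have h := dependsOn_mem_inter (dependsOn_selected n) (dependsOn_label_eq ((1 : Γ), n) s)
    have hmem : ((1 : Γ), n) ∈ {e : Γ × ℕ | e.2 = n} := rfl
    rwa [union_singleton, insert_eq_of_mem hmem] at h
  rw [hset]
  exact measure_inter_of_dependsOn _
    ((measurableSet_freeSources N n).inter (measurable_shift s (measurableSet_freeTargets N n)))
    ((measurableSet_selected n).inter (measurableSet_label_eq _ _)) hearlier hlevel
    (disjoint_left.2 fun e (hlt : e.2 < n) heq => hlt.ne heq)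

lemma mul_measure_selected_le (hn : n ∈ N) {a b : ℝ≥0∞} {K : Finset Γ}
    (hK : ∀ s ∉ K, a ≤ labelMeasure Γ law (freeSources N n ∩ shift s ⁻¹' freeTargets N n))
    (hb : ∀ s, law n {s} ≤ b) :
    a * labelMeasure Γ law (selected n) ≤ labelMeasure Γ law (matched N n) +
      labelMeasure Γ law {ω | ClosesCycle (edgeEnds ω) Prod.snd ((1 : Γ), n)} +
      K.card * (a * b) := by
  classical
  set β := labelMeasure Γ law
  set C := {ω : Γ × ℕ → Γ | ClosesCycle (edgeEnds ω) Prod.snd ((1 : Γ), n)}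
  let free : Set (Γ × ℕ → Γ) := selected n ∩ (freeSources N n ∩ slide n ⁻¹' freeTargets N n)
  have hfree_meas : MeasurableSet free := (measurableSet_selected n).inter <|
    (measurableSet_freeSources N n).inter (measurable_slide n (measurableSet_freeTargets N n))
  have hlabel : Measurable fun ω : Γ × ℕ → Γ => ω (1, n) := measurable_pi_apply _
  have hlower (s : Γ) : a * β (selected n ∩ {ω | ω (1, n) = s}) ≤
      β (free ∩ {ω | ω (1, n) = s}) + if s ∈ K then a * b else 0 := by
    split_ifs with hs
    · refine le_add_left (mul_le_mul_right ?_ a)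
      calc β (selected n ∩ {ω | ω (1, n) = s}) ≤ β {ω | ω (1, n) = s} :=
            measure_mono inter_subset_right
        _ ≤ b := (labelMeasure_label_eq law _ s).trans_le (hb s)
    · rw [measure_free_inter_label_eq law N n s, add_zero]
      exact mul_le_mul_left (hK s hs) _
  calc a * β (selected n)
      = ∑' s, a * β (selected n ∩ {ω | ω (1, n) = s}) := by
        rw [measure_eq_tsum_inter_preimage_singleton β hlabel (measurableSet_selected n),
          ENNReal.tsum_mul_left]
        rfl
    _ ≤ ∑' s, (β (free ∩ {ω | ω (1, n) = s}) + if s ∈ K then a * b else 0) :=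
        ENNReal.tsum_le_tsum hlower
    _ = β free + K.card * (a * b) := by
        rw [ENNReal.tsum_add, measure_eq_tsum_inter_preimage_singleton β hlabel hfree_meas,
          tsum_eq_sum (s := K) fun s hs => if_neg hs, Finset.sum_ite_mem, Finset.inter_self,
          Finset.sum_const, nsmul_eq_mul]
        rfl
    _ ≤ β (matched N n) + β C + K.card * (a * b) := by
        gcongr
        refine (measure_mono fun ω hω => ?_).trans (measure_union_le _ _)
        by_cases hC : ω ∈ C
        · exact Or.inr hC
        · exact Or.inl (mem_matched.2 ⟨hn, hω.1, hC, hω.2.1, hω.2.2⟩)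

lemma tendsto_measure_matched (N : Set ℕ) :
    Tendsto (fun n => labelMeasure Γ law (matched N n)) atTop (𝓝 0) :=
  ENNReal.tendsto_atTop_zero_of_tsum_ne_top <| ne_top_of_le_ne_top (measure_ne_top _ _) <|
    tsum_meas_le_meas_iUnion_of_disjoint _ (measurableSet_matched N) (pairwise_disjoint_matched N)

lemma exists_finset_lt_measure_free {a : ℝ≥0∞}
    (ha : a < labelMeasure Γ law (⋃ n, matched N n)ᶜ *
      labelMeasure Γ law (⋃ n, slide n '' matched N n)ᶜ) :
    ∃ K : Finset Γ, ∀ n, ∀ s ∉ K,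
      a < labelMeasure Γ law (freeSources N n ∩ shift s ⁻¹' freeTargets N n) := by
  have hmixing := tendsto_measure_inter_preimage_shift law
    (MeasurableSet.iUnion (measurableSet_matched N)).compl
    (MeasurableSet.iUnion fun n => measurableSet_image_slide n (measurableSet_matched N n)).compl
  have hfinite := eventually_cofinite.1 (hmixing.eventually (lt_mem_nhds ha))
  refine ⟨hfinite.toFinset, fun n s hs => ?_⟩
  rw [hfinite.mem_toFinset, mem_ofPred_eq, not_not] at hs
  refine hs.trans_le (measure_mono (inter_subset_inter ?_ (preimage_mono ?_)))
  · exact subset_iInter₂ fun m _ => compl_subset_compl.2 (subset_iUnion (matched N) m)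
  · exact subset_iInter₂ fun m _ =>
      compl_subset_compl.2 (subset_iUnion (fun m => slide m '' matched N m) m)

lemma measure_compl_iUnion_image_slide_matched (N : Set ℕ) :
    labelMeasure Γ law (⋃ n, slide n '' matched N n)ᶜ =
      labelMeasure Γ law (⋃ n, matched N n)ᶜ := by
  rw [prob_compl_eq_one_sub (.iUnion (measurableSet_matched N)), prob_compl_eq_one_sub <|
    .iUnion fun n => measurableSet_image_slide n (measurableSet_matched N n),
    measure_iUnion_image_slide_matched]

theorem measure_compl_iUnion_matched (hN : ∃ᶠ n in atTop, n ∈ N) {b : ℕ → ℝ≥0∞}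
    (hb : Tendsto b atTop (𝓝 0)) (hatom : ∀ n s, law n {s} ≤ b n)
    (hcycle : Tendsto (fun n => labelMeasure Γ law
      {ω | ClosesCycle (edgeEnds ω) Prod.snd ((1 : Γ), n)}) atTop (𝓝 0)) :
    labelMeasure Γ law (⋃ n, matched N n)ᶜ = 0 := by
  set u := labelMeasure Γ law (⋃ n, matched N n)ᶜ
  have hu_top : u ≠ ⊤ := measure_ne_top _ _
  by_contra hpos
  have hhalf : u * u / 2 < u * labelMeasure Γ law (⋃ n, slide n '' matched N n)ᶜ := by
    rw [measure_compl_iUnion_image_slide_matched]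
    exact ENNReal.half_lt_self (mul_ne_zero hpos hpos) (by finiteness)
  obtain ⟨K, hK⟩ := exists_finset_lt_measure_free law hhalf
  have htendsto := ((tendsto_measure_matched law N).add hcycle).add <|
    ENNReal.Tendsto.const_mul (a := (K.card : ℝ≥0∞)) (ENNReal.Tendsto.const_mul (a := u * u / 2) hb
      (Or.inr (by finiteness))) (Or.inr (ENNReal.natCast_ne_top _))
  simp only [mul_zero, add_zero] at htendsto
  obtain ⟨n, hn, hlt⟩ := (hN.and_eventually (htendsto.eventually (gt_mem_nhds
    (ENNReal.half_pos (ENNReal.half_pos (mul_ne_zero hpos hpos)).ne')))).exists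
  refine hlt.not_ge ?_
  calc u * u / 2 / 2 = u * u / 2 * (1 / 2) := div_eq_mul_one_div _ _
    _ ≤ u * u / 2 * labelMeasure Γ law (selected n) := by
        gcongr
        exact half_le_measure_selected law n
    _ ≤ _ := mul_measure_selected_le law hn (fun s hs => (hK n s hs).le) (hatom n)

end Matching

/-! ### Free actions from acyclic matchings -/

section Arcs

variable {Γ ι : Type*} [Group Γ] [Encodable Γ]

/-- For the labelling `ω` and colours matched along the levels `N c`, the matching of colour `c`
sends the origin to `s` (for the letter `(c, true)`) or `s` to the origin (for `(c, false)`). -/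
def Arc (N : ι → Set ℕ) : ι × Bool → (Γ × ℕ → Γ) → Γ → Prop
  | (c, true), ω, s => ∃ n, ω ∈ matched (N c) n ∧ ω (1, n) = s
  | (c, false), ω, s => ∃ n, shift s ω ∈ matched (N c) n ∧ shift s ω (1, n) = s⁻¹

variable {N : ι → Set ℕ} {ω : Γ × ℕ → Γ} {s t : Γ}

lemma Arc.flip {c : ι} {b : Bool} (h : Arc N (c, b) ω s) : Arc N (c, !b) (shift s ω) s⁻¹ := by
  cases b
  · exact h
  · simpa only [Arc, Bool.not_true, ← shift_mul, inv_mul_cancel, shift_one, inv_inv] using h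

lemma Arc.unique {a : ι × Bool} (hs : Arc N a ω s) (ht : Arc N a ω t) : s = t := by
  obtain ⟨c, _ | _⟩ := a
  · obtain ⟨n, hsn, hs⟩ := hs
    obtain ⟨m, htm, ht⟩ := ht
    have hslide_s : slide n (shift s ω) = ω := by
      rw [slide, hs, ← shift_mul, inv_mul_cancel, shift_one]
    have hslide_t : slide m (shift t ω) = ω := by
      rw [slide, ht, ← shift_mul, inv_mul_cancel, shift_one]
    obtain rfl : n = m := by
      by_contra hne
      exact disjoint_left.1 (pairwise_disjoint_image_slide_matched (N c) hne)
        ⟨_, hsn, hslide_s⟩ ⟨_, htm, hslide_t⟩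
    have hshift := injOn_slide_selected n (matched_subset_selected _ _ hsn)
      (matched_subset_selected _ _ htm) (hslide_s.trans hslide_t.symm)
    rwa [← inv_inj, ← hs, hshift]
  · obtain ⟨n, hsn, rfl⟩ := hs
    obtain ⟨m, htm, rfl⟩ := ht
    by_contra hne
    exact disjoint_left.1 (pairwise_disjoint_matched (N c) (fun h => hne (by rw [h]))) hsn htm

/-- An arc leads along an edge `e`; the letter tells which of the ends of `e` is `e.1`. -/
lemma Arc.exists_edge {c : ι} {b : Bool} {γ : Γ} (h : Arc N (c, b) (shift γ ω) s) :
    ∃ e : Γ × ℕ, e.2 ∈ N c ∧ ¬ ClosesCycle (edgeEnds ω) Prod.snd e ∧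
      edgeEnds ω e = s(γ, s * γ) ∧ e.1 = bif b then γ else s * γ := by
  cases b
  · obtain ⟨n, hn, hlabel⟩ := h
    rw [← shift_mul] at hn hlabel
    refine ⟨(s * γ, n), (mem_matched.1 hn).1,
      fun hcycle => (mem_matched.1 hn).2.2.1 (closesCycle_shift hcycle), ?_, rfl⟩
    rw [shift, one_mul] at hlabel
    rw [edgeEnds, hlabel, inv_mul_cancel_left, Sym2.eq_swap]
  · obtain ⟨n, hn, hlabel⟩ := h
    refine ⟨(γ, n), (mem_matched.1 hn).1,
      fun hcycle => (mem_matched.1 hn).2.2.1 (closesCycle_shift hcycle), ?_, rfl⟩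
    rw [shift, one_mul] at hlabel
    rw [edgeEnds, hlabel]

/-- The labellings for which every vertex is matched as a source and as a target in every colour. -/
def fullyMatched (N : ι → Set ℕ) : Set (Γ × ℕ → Γ) := {ω | ∀ γ a, ∃ s, Arc N a (shift γ ω) s}

lemma shift_mem_fullyMatched (h : ω ∈ fullyMatched N) (γ : Γ) : shift γ ω ∈ fullyMatched N :=
  fun γ' a => by simpa only [← shift_mul] using h (γ' * γ) a

lemma exists_arc (h : ω ∈ fullyMatched N) (a : ι × Bool) : ∃ s, Arc N a ω s := by
  simpa only [shift_one] using h 1 a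

open scoped Classical in
/-- The group element by which the letter `a` moves the origin. -/
noncomputable def step (N : ι → Set ℕ) (a : ι × Bool) (ω : Γ × ℕ → Γ) : Γ :=
  if h : ω ∈ fullyMatched N then (exists_arc h a).choose else 1

lemma arc_step (h : ω ∈ fullyMatched N) (a : ι × Bool) : Arc N a ω (step N a ω) := by
  rw [step, dif_pos h]
  exact (exists_arc h a).choose_spec

lemma step_flip (N : ι → Set ℕ) (c : ι) (b : Bool) (ω : Γ × ℕ → Γ) :
    step N (c, !b) (shift (step N (c, b) ω) ω) = (step N (c, b) ω)⁻¹ := by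
  by_cases h : ω ∈ fullyMatched N
  · exact (arc_step (shift_mem_fullyMatched h _) _).unique (arc_step h _).flip
  · simp [step, h, shift_one]

variable [MeasurableSpace Γ] [MeasurableSingletonClass Γ]

lemma measurableSet_arc (N : ι → Set ℕ) (a : ι × Bool) (s : Γ) :
    MeasurableSet {ω : Γ × ℕ → Γ | Arc N a ω s} := by
  have hforward (c : ι) (s : Γ) : MeasurableSet {ω : Γ × ℕ → Γ | Arc N (c, true) ω s} := by
    simp only [Arc, ofPred_exists]
    exact .iUnion fun n => (measurableSet_matched _ _).inter (measurableSet_label_eq _ _)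
  obtain ⟨c, _ | _⟩ := a
  · exact measurable_shift s (hforward c s⁻¹)
  · exact hforward c s

variable [Countable ι]

lemma measurableSet_fullyMatched (N : ι → Set ℕ) :
    MeasurableSet (fullyMatched N : Set (Γ × ℕ → Γ)) := by
  simp only [fullyMatched, ofPred_forall, ofPred_exists]
  exact .iInter fun γ => .iInter fun a => .iUnion fun s =>
    measurable_shift γ (measurableSet_arc N a s)

lemma measurable_step (N : ι → Set ℕ) (a : ι × Bool) :
    Measurable (step N a : (Γ × ℕ → Γ) → Γ) := by
  refine measurable_to_countable' fun s => ?_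
  have hfiber : step N a ⁻¹' {s} = {ω : Γ × ℕ → Γ | ω ∈ fullyMatched N ∧ Arc N a ω s} ∪
      {ω | ω ∉ fullyMatched N ∧ (1 : Γ) = s} := by
    ext ω
    by_cases h : ω ∈ fullyMatched N
    · simp only [mem_preimage, mem_singleton_iff, mem_union, mem_ofPred_eq, h, true_and,
        not_true_eq_false, false_and, or_false]
      exact ⟨fun hs => hs ▸ arc_step h a, (arc_step h a).unique⟩
    · simp [step, h]
  rw [hfiber]
  exact ((measurableSet_fullyMatched N).inter (measurableSet_arc N a s)).union <|
    (measurableSet_fullyMatched N).compl.inter (.const _)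

lemma ae_mem_fullyMatched (law : ℕ → Measure Γ) [∀ n, IsProbabilityMeasure (law n)]
    (hN : ∀ c, labelMeasure Γ law (⋃ n, matched (N c) n)ᶜ = 0) :
    ∀ᵐ ω ∂labelMeasure Γ law, ω ∈ fullyMatched N := by
  have horigin (a : ι × Bool) : ∀ᵐ ω ∂labelMeasure Γ law, ∃ s, Arc N a ω s := by
    obtain ⟨c, _ | _⟩ := a
    · filter_upwards [compl_mem_ae_iff.2
        ((measure_compl_iUnion_image_slide_matched law (N c)).trans (hN c))] with ω hω
      obtain ⟨n, z, hz, rfl⟩ := mem_iUnion.1 (not_not.1 hω)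
      exact ⟨_, Arc.flip (b := true) ⟨n, hz, rfl⟩⟩
    · filter_upwards [compl_mem_ae_iff.2 (hN c)] with ω hω
      obtain ⟨n, hn⟩ := mem_iUnion.1 (not_not.1 hω)
      exact ⟨_, n, hn, rfl⟩
  exact ae_all_iff.2 fun γ => ae_all_iff.2 fun a =>
    ((bernoulliShift Γ law).preserves γ).quasiMeasurePreserving.ae (horigin a)

end Arcs

section FreeAction

variable {Γ ι X : Type*} [Group Γ] [Encodable Γ] [MeasurableSpace X] {μ : Measure X}
  (f : PMP Γ X μ) {θ : X → Γ × ℕ → Γ} {N : ι → Set ℕ}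

/-- A reduced word that moves the origin to itself would trace a closed reduced walk in the
matchings, and the edge of highest level on that walk would close a cycle. -/
lemma wordCocycle_step_ne_one (hθ : ∀ γ x, θ (f.act γ x) = shift γ (θ x))
    (hN : Pairwise (Function.onFun Disjoint N)) {x : X}
    (hx : θ x ∈ fullyMatched N) {L : List (ι × Bool)} (hL : FreeGroup.IsReduced L) (hne : L ≠ []) :
    f.wordCocycle (fun a x => step N a (θ x)) L x ≠ 1 := by
  set k := L.length with hk
  have hk_pos : 0 < k := List.length_pos_iff.2 hne
  let v (i : ℕ) : Γ := f.wordCocycle (fun a x => step N a (θ x)) (L.drop (k - i)) x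
  let letter (i : ℕ) (hi : i < k) : ι × Bool := L[k - (i + 1)]
  have hsucc (i : ℕ) (hi : i < k) :
      v (i + 1) = step N (letter i hi) (shift (v i) (θ x)) * v i := by
    rw [← hθ]
    exact f.wordCocycle_drop _ hi x
  have hedge (i : ℕ) (hi : i < k) : ∃ e : Γ × ℕ, e.2 ∈ N (letter i hi).1 ∧
      ¬ ClosesCycle (edgeEnds (θ x)) Prod.snd e ∧ edgeEnds (θ x) e = s(v i, v (i + 1)) ∧
      e.1 = bif (letter i hi).2 then v i else v (i + 1) := by
    rw [hsucc i hi]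
    exact (arc_step (shift_mem_fullyMatched hx (v i)) (letter i hi)).exists_edge
  choose! edge hlevel hacyclic hends horient using hedge
  have hreduced (i : ℕ) (hi : i + 1 < k) : edge i ≠ edge (i + 1) := by
    intro heq
    have hcolour : (letter (i + 1) hi).1 = (letter i (by omega)).1 := by
      by_contra hc
      exact disjoint_left.1 (hN hc) (hlevel (i + 1) hi) (heq ▸ hlevel i (by omega))
    have hsign : (letter (i + 1) hi).2 = (letter i (by omega)).2 := by
      have hchain := List.isChain_iff_getElem.1 hL (k - (i + 1 + 1)) (by omega)
      simp only [show k - (i + 1 + 1) + 1 = k - (i + 1) by omega] at hchain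
      exact hchain hcolour
    have hsource := horient (i + 1) hi
    rw [hsign, ← heq, horient i (by omega)] at hsource
    cases hb : (letter i (by omega)).2
    · rw [hb, cond_false, cond_false] at hsource
      exact hacyclic (i + 1) hi ⟨_, _, hends (i + 1) hi, hsource ▸ .refl⟩
    · rw [hb, cond_true, cond_true] at hsource
      exact hacyclic i (by omega) ⟨_, _, hends i (by omega), hsource ▸ .refl⟩
  have hwalk := walk_ne_of_not_closesCycle hends hreduced hacyclic (k - 1) 0 (by omega)
  rw [show 0 + (k - 1) + 1 = k by omega] at hwalk
  simp only [v, Nat.sub_zero, Nat.sub_self, List.drop_zero, hk, List.drop_length] at hwalk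
  exact hwalk.symm

theorem exists_freeGroup_action_of_matchings [Countable ι] [MeasurableSpace Γ]
    [MeasurableSingletonClass Γ] {law : ℕ → Measure Γ} [∀ n, IsProbabilityMeasure (law n)]
    (hf : IsFreeAction f) (hθμ : MeasurePreserving θ μ (labelMeasure Γ law))
    (hθ : ∀ γ x, θ (f.act γ x) = shift γ (θ x)) (hN : Pairwise (Function.onFun Disjoint N))
    (hmatched : ∀ c, labelMeasure Γ law (⋃ n, matched (N c) n)ᶜ = 0) :
    ∃ h : PMP (FreeGroup ι) X μ, IsFreeAction h ∧ ∀ x t, ∃ γ, h.act t x = f.act γ x := by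
  classical
  have hflip (c : ι) (b : Bool) (x : X) :
      step N (c, !b) (θ (f.along (fun x => step N (c, b) (θ x)) x)) =
        (step N (c, b) (θ x))⁻¹ := by
    rw [PMP.along, hθ, step_flip]
  let h := f.freeGroupAlong (τ := fun a x => step N a (θ x)) hflip fun a =>
    (measurable_step N a).comp hθμ.measurable
  refine ⟨h, ?_, fun x t => ⟨_, f.freeGroupAlong_act hflip _ t x⟩⟩
  filter_upwards [hf, hθμ.quasiMeasurePreserving.ae (ae_mem_fullyMatched law hmatched)]
    with x hfree hx t ht
  rw [f.freeGroupAlong_act hflip] at ht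
  by_contra hne
  exact wordCocycle_step_ne_one f hθ hN hx FreeGroup.isReduced_toWord
    (FreeGroup.toWord_eq_nil_iff.not.2 hne) (hfree _ ht)

end FreeAction

/-! ### The second moment of a random labelling -/

section SecondMoment

lemma covariance_indicator_one_eq_zero {Ω : Type*} [MeasurableSpace Ω] {P : Measure Ω}
    [IsProbabilityMeasure P] {U V : Set Ω} (hU : MeasurableSet U) (hV : MeasurableSet V)
    (hUV : P (U ∩ V) = P U * P V) :
    cov[U.indicator (1 : Ω → ℝ), V.indicator (1 : Ω → ℝ); P] = 0 := by
  have hmemLp {W : Set Ω} (hW : MeasurableSet W) : MemLp (W.indicator (1 : Ω → ℝ)) 2 P :=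
    (memLp_const (1 : ℝ)).indicator hW
  rw [covariance_eq_sub (hmemLp hU) (hmemLp hV), ← inter_indicator_one,
    integral_indicator_one (hU.inter hV), integral_indicator_one hU, integral_indicator_one hV,
    measureReal_def, hUV, ENNReal.toReal_mul]
  exact sub_self _

lemma abs_integral_le_one {Ω : Type*} [MeasurableSpace Ω] {P : Measure Ω} [IsProbabilityMeasure P]
    {Y : Ω → ℝ} (hY : ∀ ω, |Y ω| ≤ 1) : |∫ ω, Y ω ∂P| ≤ 1 := by
  simpa using norm_integral_le_of_norm_le_const (f := Y) (ae_of_all P hY)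

variable {X Ω : Type*} [MeasurableSpace X] [MeasurableSpace Ω] {μ : Measure X}
  [IsProbabilityMeasure μ] {P : Measure Ω} [IsProbabilityMeasure P] {h : X → Ω → ℝ}

lemma integrable_sq_integral_of_abs_le_one (hm : Measurable (Function.uncurry h))
    (hh : ∀ x ω, |h x ω| ≤ 1) : Integrable (fun ω => (∫ x, h x ω ∂μ) ^ 2) P := by
  refine .of_bound (hm.stronglyMeasurable.integral_prod_left.pow 2).aestronglyMeasurable 1
    (ae_of_all _ fun ω => ?_)
  rw [norm_pow]
  exact pow_le_one₀ (norm_nonneg _) (abs_integral_le_one fun x => hh x ω)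

lemma integral_sq_integral_le (hm : Measurable (Function.uncurry h)) (hh : ∀ x ω, |h x ω| ≤ 1)
    {B : Set (X × X)} (hB : MeasurableSet B)
    (hcov : ∀ z ∉ B, ∫ ω, h z.1 ω * h z.2 ω ∂P ≤ 0) :
    ∫ ω, (∫ x, h x ω ∂μ) ^ 2 ∂P ≤ (μ.prod μ).real B := by
  have hprod (z : X × X) (ω : Ω) : |h z.1 ω * h z.2 ω| ≤ 1 := by
    rw [abs_mul]
    exact mul_le_one₀ (hh _ _) (abs_nonneg _) (hh _ _)
  have hmprod : Measurable (Function.uncurry fun (ω : Ω) (z : X × X) => h z.1 ω * h z.2 ω) :=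
    (hm.comp ((measurable_fst.comp measurable_snd).prodMk measurable_fst)).mul
      (hm.comp ((measurable_snd.comp measurable_snd).prodMk measurable_fst))
  have hint : Integrable (Function.uncurry fun (ω : Ω) (z : X × X) => h z.1 ω * h z.2 ω)
      (P.prod (μ.prod μ)) :=
    .of_bound hmprod.aestronglyMeasurable 1 (ae_of_all _ fun w => hprod w.2 w.1)
  calc ∫ ω, (∫ x, h x ω ∂μ) ^ 2 ∂P
      = ∫ ω, ∫ z, h z.1 ω * h z.2 ω ∂(μ.prod μ) ∂P := by
        congr 1 with ω
        rw [sq, integral_prod_mul (fun x => h x ω) (fun x => h x ω)]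
    _ = ∫ z, ∫ ω, h z.1 ω * h z.2 ω ∂P ∂(μ.prod μ) := integral_integral_swap hint
    _ ≤ ∫ z, B.indicator 1 z ∂(μ.prod μ) := by
        refine integral_mono hint.integral_prod_right
          ((integrable_const (1 : ℝ)).indicator hB) fun z => ?_
        by_cases hz : z ∈ B
        · exact (le_abs_self _).trans
            ((abs_integral_le_one (hprod z)).trans_eq (indicator_of_mem hz 1).symm)
        · exact (hcov z hz).trans_eq (indicator_of_notMem hz 1).symm
    _ = (μ.prod μ).real B := integral_indicator_one hB

end SecondMoment

lemma infinitePi_preimage_comp_of_injOn {I J K : Type*} [MeasurableSpace K] (P : J → Measure K)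
    [∀ j, IsProbabilityMeasure (P j)] {r : I → J} {E : Set I} (hr : InjOn r E) {U : Set (I → K)}
    (hU : MeasurableSet U) (hUE : DependsOn (· ∈ U) E) :
    Measure.infinitePi P ((· ∘ r) ⁻¹' U) = Measure.infinitePi (fun i => P (r i)) U := by
  classical
  obtain ⟨ω₀⟩ := (Measure.infinitePi fun i => P (r i)).nonempty_of_neZero
  let extend (w : E → K) (i : I) : K := if h : i ∈ E then w ⟨i, h⟩ else ω₀ i
  have hextend : Measurable extend := measurable_pi_lambda _ fun i => by
    by_cases h : i ∈ E
    · simpa only [extend, dif_pos h] using measurable_pi_apply _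
    · simpa only [extend, dif_neg h] using measurable_const
  have hmem (ω : I → K) : ω ∈ U ↔ extend (fun i => ω i) ∈ U :=
    iff_of_eq (hUE fun i hi => by simp only [extend, dif_pos hi])
  have hJ := Measure.map_infinitePi_infinitePi_of_inj (P := P) (injOn_iff_injective.1 hr)
  have hI := Measure.map_infinitePi_infinitePi_of_inj (P := fun i => P (r i))
    (Subtype.val_injective (p := (· ∈ E)))
  calc Measure.infinitePi P ((· ∘ r) ⁻¹' U)
      = Measure.infinitePi P ((fun k (i : E) => k (r i)) ⁻¹' (extend ⁻¹' U)) :=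
        congrArg _ (Set.ext fun k => hmem _)
    _ = Measure.infinitePi (fun i : E => P (r i)) (extend ⁻¹' U) := by
        rw [← Measure.map_apply (by fun_prop) (hextend hU)]
        exact DFunLike.congr_fun hJ _
    _ = Measure.infinitePi (fun i => P (r i)) ((fun ω (i : E) => ω i) ⁻¹' (extend ⁻¹' U)) := by
        rw [← Measure.map_apply (by fun_prop) (hextend hU)]
        exact DFunLike.congr_fun hI.symm _
    _ = Measure.infinitePi (fun i => P (r i)) U := congrArg _ (Set.ext fun ω => (hmem ω).symm)

/-! ### Free actions weakly contain Bernoulli shifts -/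

section RandomLabelling

variable {Γ ι K Q X : Type*} [Group Γ] [MeasurableSpace X] {μ : Measure X}

/-- The labelling of `Γ × ι` that a labelling `k` of `Q × ι` induces at the point `x` through a
colouring `q` of the space: the labels of `γ` are those of the colour of `γ • x`. For random `k`
this is an equivariant random map that resembles the Bernoulli shift when the colouring is fine. -/
def PMP.orbitLabels (f : PMP Γ X μ) (q : X → Q) (k : Q × ι → K) (x : X) : Γ × ι → K :=
  fun e => k (q (f.act e.1 x), e.2)

lemma PMP.orbitLabels_act (f : PMP Γ X μ) (q : X → Q) (k : Q × ι → K) (γ : Γ) (x : X) :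
    f.orbitLabels q k (f.act γ x) = shift γ (f.orbitLabels q k x) :=
  funext fun e => congrArg (fun y => k (q y, e.2)) (f.act_mul e.1 γ x).symm

/-- The points `f.act γ z.1` and `f.act γ z.2` of the orbits of the two coordinates of `z`,
as one family. -/
def PMP.twoOrbits (f : PMP Γ X μ) (z : X × X) : Γ ⊕ Γ → X :=
  Sum.elim (fun γ => f.act γ z.1) fun γ => f.act γ z.2

/-- The pairs of points for which a colouring `q` fails to separate the translates by `S`
of the two points; off this set the induced random labels are independent over `S`. -/
def PMP.collisionSet (f : PMP Γ X μ) (q : X → Q) (S : Finset Γ) : Set (X × X) :=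
  {z | ¬ InjOn (q ∘ f.twoOrbits z) (S.disjSum S)}

/-- A function on `X × (Γ × ι → K)` that only reads the labels over the elements of `S`. -/
def IsLocalOn {α : Type*} (S : Finset Γ) (C : X × (Γ × ι → K) → α) : Prop :=
  ∀ x, DependsOn (fun ω => C (x, ω)) ((S : Set Γ) ×ˢ univ)

section Measurability

variable [Countable Q] [MeasurableSpace Q] [DiscreteMeasurableSpace Q]

lemma PMP.measurable_orbitLabels [MeasurableSpace K] (f : PMP Γ X μ) {q : X → Q}
    (hq : Measurable q) :
    Measurable fun z : X × (Q × ι → K) => f.orbitLabels q z.2 z.1 := by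
  refine measurable_pi_lambda _ fun e => ?_
  have heval : Measurable fun p : Q × (Q × ι → K) => p.2 (p.1, e.2) :=
    measurable_from_prod_countable_right fun c => measurable_pi_apply (c, e.2)
  exact heval.comp ((hq.comp ((f.measurable e.1).comp measurable_fst)).prodMk measurable_snd)

lemma PMP.measurableSet_collisionSet (f : PMP Γ X μ) {q : X → Q} (hq : Measurable q)
    (S : Finset Γ) : MeasurableSet (f.collisionSet q S) := by
  have horbit (s : Γ ⊕ Γ) : Measurable fun z => q (f.twoOrbits z s) := by
    cases s with
    | inl γ => exact hq.comp ((f.measurable γ).comp measurable_fst)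
    | inr γ => exact hq.comp ((f.measurable γ).comp measurable_snd)
  have hsep : (f.collisionSet q S)ᶜ = ⋂ s ∈ S.disjSum S, ⋂ t ∈ S.disjSum S,
      {z | q (f.twoOrbits z s) = q (f.twoOrbits z t) → s = t} := by
    ext z
    simp [PMP.collisionSet, InjOn]
  rw [← MeasurableSet.compl_iff, hsep]
  refine Finset.measurableSet_biInter _ fun s _ => Finset.measurableSet_biInter _ fun t _ => ?_
  exact (measurableSet_eq_fun (horbit s) (horbit t)).imp (.const _)

end Measurability

variable [MeasurableSpace K] (law : ι → Measure K) [∀ i, IsProbabilityMeasure (law i)]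
  {f : PMP Γ X μ} {q : X → Q}

lemma labelMeasure_preimage_orbitLabels {S : Set Γ} {x : X}
    (hinj : InjOn (fun γ => q (f.act γ x)) S) {U : Set (Γ × ι → K)} (hU : MeasurableSet U)
    (hUS : DependsOn (· ∈ U) (S ×ˢ univ)) :
    labelMeasure Q law {k | f.orbitLabels q k x ∈ U} = labelMeasure Γ law U := by
  refine infinitePi_preimage_comp_of_injOn (fun e : Q × ι => law e.2)
    (r := fun e : Γ × ι => (q (f.act e.1 x), e.2)) ?_ hU hUS
  exact fun e he e' he' h => Prod.ext (hinj he.1 he'.1 (Prod.ext_iff.1 h).1) (Prod.ext_iff.1 h).2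

lemma labelMeasure_inter_preimage_orbitLabels {S : Set Γ} {x y : X}
    (hdisj : ∀ γ ∈ S, ∀ δ ∈ S, q (f.act γ x) ≠ q (f.act δ y)) {U V : Set (Γ × ι → K)}
    (hU : MeasurableSet {k | f.orbitLabels q k x ∈ U})
    (hV : MeasurableSet {k | f.orbitLabels q k y ∈ V}) (hUS : DependsOn (· ∈ U) (S ×ˢ univ))
    (hVS : DependsOn (· ∈ V) (S ×ˢ univ)) :
    labelMeasure Q law ({k | f.orbitLabels q k x ∈ U} ∩ {k | f.orbitLabels q k y ∈ V}) =
      labelMeasure Q law {k | f.orbitLabels q k x ∈ U} *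
        labelMeasure Q law {k | f.orbitLabels q k y ∈ V} := by
  refine measure_inter_of_dependsOn _ hU hV
    (J := (fun e : Γ × ι => (q (f.act e.1 x), e.2)) '' (S ×ˢ univ))
    (L := (fun e : Γ × ι => (q (f.act e.1 y), e.2)) '' (S ×ˢ univ))
    (fun k k' h => hUS fun e he => h _ (mem_image_of_mem _ he))
    (fun k k' h => hVS fun e he => h _ (mem_image_of_mem _ he)) ?_
  rw [Set.disjoint_left]
  rintro _ ⟨e, he, rfl⟩ ⟨e', he', heq⟩
  exact hdisj e.1 he.1 e'.1 he'.1 (congrArg Prod.fst heq).symm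

section Deviation

variable (f q)

/-- The deviation from its mean of the event that the induced labelling at `x` lies in `A`. -/
noncomputable def labelDeviation (A : Set (X × (Γ × ι → K))) (x : X) (k : Q × ι → K) : ℝ :=
  {k | (x, f.orbitLabels q k x) ∈ A}.indicator 1 k - (labelMeasure Γ law).real (Prod.mk x ⁻¹' A)

variable {q} {A : Set (X × (Γ × ι → K))}

lemma abs_labelDeviation_le_one (x : X) (k : Q × ι → K) : |labelDeviation law f q A x k| ≤ 1 := by
  have hmean : (labelMeasure Γ law).real (Prod.mk x ⁻¹' A) ∈ Icc 0 1 :=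
    ⟨measureReal_nonneg, measureReal_le_one⟩
  have hindicator : {k | (x, f.orbitLabels q k x) ∈ A}.indicator (1 : (Q × ι → K) → ℝ) k ∈
      Icc 0 1 :=
    ⟨indicator_nonneg (fun _ _ => zero_le_one) k, indicator_le_self' (fun _ _ => zero_le_one) k⟩
  exact abs_sub_le_iff.2 ⟨by linarith [hindicator.2, hmean.1], by linarith [hindicator.1, hmean.2]⟩

variable [Countable Q] [MeasurableSpace Q] [DiscreteMeasurableSpace Q]

lemma measurableSet_orbitLabels_mem (hq : Measurable q) (hA : MeasurableSet A) :
    MeasurableSet {z : X × (Q × ι → K) | (z.1, f.orbitLabels q z.2 z.1) ∈ A} :=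
  (measurable_fst.prodMk (f.measurable_orbitLabels hq)) hA

lemma measurable_labelDeviation (hq : Measurable q) (hA : MeasurableSet A) :
    Measurable (Function.uncurry (labelDeviation law f q A)) :=
  (measurable_one.indicator (measurableSet_orbitLabels_mem f hq hA)).sub
    ((measurable_measure_prodMk_left hA).ennreal_toReal.comp measurable_fst)

lemma integral_labelDeviation [IsProbabilityMeasure μ] (hq : Measurable q) (hA : MeasurableSet A)
    (k : Q × ι → K) :
    ∫ x, labelDeviation law f q A x k ∂μ =
      μ.real {x | (x, f.orbitLabels q k x) ∈ A} - (μ.prod (labelMeasure Γ law)).real A := by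
  have hmeas : MeasurableSet {x | (x, f.orbitLabels q k x) ∈ A} :=
    measurable_prodMk_right (measurableSet_orbitLabels_mem f hq hA)
  have hfiber : (μ.prod (labelMeasure Γ law)).real A =
      ∫ x, (labelMeasure Γ law).real (Prod.mk x ⁻¹' A) ∂μ := by
    rw [measureReal_def, Measure.prod_apply hA,
      ← integral_toReal (measurable_measure_prodMk_left hA).aemeasurable
        (ae_of_all _ fun x => measure_lt_top _ _)]
    rfl
  rw [hfiber, ← integral_indicator_one hmeas, ← integral_sub]
  · rfl
  · exact (integrable_const (1 : ℝ)).indicator hmeas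
  · refine .of_bound
      (measurable_measure_prodMk_left hA).ennreal_toReal.aestronglyMeasurable 1
      (ae_of_all _ fun x => ?_)
    rw [Real.norm_of_nonneg measureReal_nonneg]
    exact measureReal_le_one

lemma integral_labelDeviation_mul_eq_zero (hq : Measurable q) (hA : MeasurableSet A)
    {S : Finset Γ} (hAS : IsLocalOn S (· ∈ A)) {z : X × X} (hz : z ∉ f.collisionSet q S) :
    ∫ k, labelDeviation law f q A z.1 k * labelDeviation law f q A z.2 k ∂labelMeasure Q law
      = 0 := by
  have hsep : InjOn (q ∘ f.twoOrbits z) (S.disjSum S) := not_not.1 hz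
  have hmeas (x : X) : MeasurableSet {k | (x, f.orbitLabels q k x) ∈ A} :=
    measurable_prodMk_left (measurableSet_orbitLabels_mem f hq hA)
  have hmean {x : X} (hx : InjOn (fun γ => q (f.act γ x)) S) :
      (labelMeasure Γ law).real (Prod.mk x ⁻¹' A) =
        ∫ k, {k | (x, f.orbitLabels q k x) ∈ A}.indicator (1 : (Q × ι → K) → ℝ) k
          ∂labelMeasure Q law := by
    rw [integral_indicator_one (hmeas x)]
    exact congrArg ENNReal.toReal (labelMeasure_preimage_orbitLabels law hx
      (measurable_prodMk_left hA) (hAS x)).symm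
  have hfst : InjOn (fun γ => q (f.act γ z.1)) S := fun γ hγ δ hδ h =>
    Sum.inl_injective (hsep (Finset.inl_mem_disjSum.2 hγ) (Finset.inl_mem_disjSum.2 hδ) h)
  have hsnd : InjOn (fun γ => q (f.act γ z.2)) S := fun γ hγ δ hδ h =>
    Sum.inr_injective (hsep (Finset.inr_mem_disjSum.2 hγ) (Finset.inr_mem_disjSum.2 hδ) h)
  simp only [labelDeviation, hmean hfst, hmean hsnd]
  refine covariance_indicator_one_eq_zero (hmeas _) (hmeas _)
    (labelMeasure_inter_preimage_orbitLabels law ?_ (hmeas _) (hmeas _) (hAS _) (hAS _))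
  exact fun γ hγ δ hδ h => Sum.inl_ne_inr
    (hsep (Finset.inl_mem_disjSum.2 hγ) (Finset.inr_mem_disjSum.2 hδ) h)

end Deviation

variable [Countable Q] [MeasurableSpace Q] [DiscreteMeasurableSpace Q] [IsProbabilityMeasure μ]

/-- The second moment method: off the collision set, the deviations at the two points are
uncorrelated. -/
lemma exists_orbitLabels_forall_abs_sub_le (hq : Measurable q) {T : Type*} (I : Finset T)
    {A : T → Set (X × (Γ × ι → K))} (hA : ∀ t ∈ I, MeasurableSet (A t)) {S : Finset Γ}
    (hAS : ∀ t ∈ I, IsLocalOn S (· ∈ A t)) {ε : ℝ} (hε : 0 ≤ ε)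
    (hcoll : I.card * (μ.prod μ).real (f.collisionSet q S) ≤ ε ^ 2) :
    ∃ k : Q × ι → K, ∀ t ∈ I, |μ.real {x | (x, f.orbitLabels q k x) ∈ A t} -
      (μ.prod (labelMeasure Γ law)).real (A t)| ≤ ε := by
  let deviation (t : T) (k : Q × ι → K) : ℝ := ∫ x, labelDeviation law f q (A t) x k ∂μ
  have hint : ∀ t ∈ I, Integrable (fun k => deviation t k ^ 2) (labelMeasure Q law) := fun t ht =>
    integrable_sq_integral_of_abs_le_one (measurable_labelDeviation law f hq (hA t ht))
      (abs_labelDeviation_le_one law f)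
  have hmoment : ∀ t ∈ I, ∫ k, deviation t k ^ 2 ∂labelMeasure Q law ≤
      (μ.prod μ).real (f.collisionSet q S) := fun t ht =>
    integral_sq_integral_le (measurable_labelDeviation law f hq (hA t ht))
      (abs_labelDeviation_le_one law f) (f.measurableSet_collisionSet hq S)
      fun z hz => (integral_labelDeviation_mul_eq_zero law f hq (hA t ht) (hAS t ht) hz).le
  obtain ⟨k, hk⟩ := exists_le_integral (integrable_finsetSum I hint)
  refine ⟨k, fun t ht => abs_le_of_sq_le_sq (?_ : _ ≤ ε ^ 2) hε⟩
  rw [← integral_labelDeviation law f hq (hA t ht)]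
  calc deviation t k ^ 2
      ≤ ∑ t ∈ I, deviation t k ^ 2 :=
        Finset.single_le_sum (f := fun t => deviation t k ^ 2) (fun t _ => sq_nonneg _) ht
    _ ≤ ∑ t ∈ I, ∫ k, deviation t k ^ 2 ∂labelMeasure Q law :=
        hk.trans_eq (integral_finsetSum I hint)
    _ ≤ I.card * (μ.prod μ).real (f.collisionSet q S) := by
        simpa using Finset.sum_le_sum hmoment
    _ ≤ ε ^ 2 := hcoll

end RandomLabelling

lemma exists_finite_colorings_eventually_ne (X : Type*) [MeasurableSpace X]
    [MeasurableSpace.CountablyGenerated X] [MeasurableSpace.SeparatesPoints X] :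
    ∃ q : ∀ N : ℕ, X → Fin N → Bool, (∀ N, Measurable (q N)) ∧
      ∀ x y, x ≠ y → ∀ᶠ N in atTop, q N x ≠ q N y := by
  refine ⟨fun N x i => MeasurableSpace.mapNatBool X x i, fun N => measurable_pi_lambda _ fun i =>
    (measurable_pi_apply (i : ℕ)).comp (MeasurableSpace.measurable_mapNatBool X),
    fun x y hxy => ?_⟩
  obtain ⟨i, hi⟩ := Function.ne_iff.1 ((MeasurableSpace.injective_mapNatBool X).ne hxy)
  filter_upwards [eventually_gt_atTop i] with N hN heq
  exact hi (congrFun heq ⟨i, hN⟩)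

section Collisions

variable {Γ X : Type*} [Group Γ] [Countable Γ] [MeasurableSpace X] [MeasurableEq X]
  {μ : Measure X} [IsProbabilityMeasure μ] [NullSingletonClass μ] {f : PMP Γ X μ}

lemma ae_injective_twoOrbits (hf : IsFreeAction f) :
    ∀ᵐ z ∂μ.prod μ, Function.Injective (f.twoOrbits z) := by
  have hcross (γ δ : Γ) : ∀ᵐ z ∂μ.prod μ, f.act γ z.1 ≠ f.act δ z.2 := by
    have hmeas : MeasurableSet {z : X × X | f.act γ z.1 = f.act δ z.2} :=
      measurableSet_eq_fun ((f.measurable γ).comp measurable_fst)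
        ((f.measurable δ).comp measurable_snd)
    rw [ae_iff]
    simp only [ne_eq, not_not]
    rw [Measure.measure_prod_null hmeas]
    refine ae_of_all _ fun x => Set.Subsingleton.measure_zero (fun y hy y' hy' => ?_) μ
    exact f.act_injective δ (hy.symm.trans hy')
  have hinj {x : X} (hx : ∀ γ, f.act γ x = x → γ = 1) : Function.Injective (f.act · x) :=
    fun γ δ (h : f.act γ x = f.act δ x) =>
      (inv_mul_eq_one.1 (hx (δ⁻¹ * γ) (by rw [f.act_mul, h, f.act_inv_act]))).symm
  filter_upwards [Measure.quasiMeasurePreserving_fst.ae hf,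
    Measure.quasiMeasurePreserving_snd.ae hf, ae_all_iff.2 fun γ => ae_all_iff.2 (hcross γ)]
    with z hfst hsnd hne
  exact (hinj hfst).sumElim (hinj hsnd) hne

lemma tendsto_measureReal_collisionSet (hf : IsFreeAction f) {Q : ℕ → Type*}
    [∀ N, Countable (Q N)] [∀ N, MeasurableSpace (Q N)] [∀ N, DiscreteMeasurableSpace (Q N)]
    {q : ∀ N, X → Q N} (hq : ∀ N, Measurable (q N))
    (hsep : ∀ x y, x ≠ y → ∀ᶠ N in atTop, q N x ≠ q N y) (S : Finset Γ) :
    Tendsto (fun N => (μ.prod μ).real (f.collisionSet (q N) S)) atTop (𝓝 0) := by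
  rw [← measureReal_empty (μ := μ.prod μ)]
  refine (ENNReal.tendsto_toReal (measure_ne_top _ _)).comp
    (tendsto_measure_of_ae_tendsto_indicator_of_isFiniteMeasure atTop .empty
      (fun N => f.measurableSet_collisionSet (hq N) S) ?_)
  filter_upwards [ae_injective_twoOrbits hf] with z hz
  have heventually : ∀ᶠ N in atTop, ∀ s ∈ S.disjSum S, ∀ t ∈ S.disjSum S,
      q N (f.twoOrbits z s) = q N (f.twoOrbits z t) → s = t := by
    simp only [eventually_all_finset]
    intro s _ t _
    by_cases hst : s = t
    · exact .of_forall fun _ _ => hst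
    · filter_upwards [hsep _ _ (hz.ne hst)] with N hN h using absurd h hN
  filter_upwards [heventually] with N hN
  exact iff_of_false (not_not.2 hN) (notMem_empty z)

end Collisions

section Approximation

lemma exists_mem_isSetAlgebra_measureReal_ne_epsilon_le {Z α : Type*} {m : MeasurableSpace Z}
    {ν : Measure Z} [IsFiniteMeasure ν] [Finite α] [Nonempty α] [MeasurableSpace α]
    [MeasurableSingletonClass α] {𝒜 : Set (Set Z)} (h𝒜 : IsSetAlgebra 𝒜)
    (hgen : m = MeasurableSpace.generateFrom 𝒜) {C : Z → α} (hC : Measurable C) {δ : ℝ}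
    (hδ : 0 < δ) :
    ∃ S : α → Set Z, (∀ a, S a ∈ 𝒜) ∧
      ν.real {z | C z ≠ Classical.epsilon fun a => z ∈ S a} ≤ δ := by
  have := Fintype.ofFinite α
  have hcard : (0 : ℝ) < Fintype.card α := Nat.cast_pos.2 Fintype.card_pos
  have happrox (a : α) := (Measure.MeasureDense.of_generateFrom_isSetAlgebra_finite (μ := ν) h𝒜
    hgen).approx _ (hC (measurableSet_singleton a)) (measure_ne_top _ _) _ (div_pos hδ hcard)
  choose S hS𝒜 hS using happrox
  refine ⟨S, hS𝒜, ?_⟩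
  have hsub : {z | C z ≠ Classical.epsilon fun a => z ∈ S a} ⊆
      ⋃ a, symmDiff (C ⁻¹' {a}) (S a) := by
    intro z hz
    by_contra hcon
    have hmem (a : α) : z ∈ S a ↔ a = C z := by
      have := fun h => hcon (mem_iUnion.2 ⟨a, h⟩)
      rw [mem_symmDiff, mem_preimage, mem_singleton_iff] at this
      grind
    exact hz (by simp only [hmem, Classical.epsilon_singleton])
  calc ν.real {z | C z ≠ Classical.epsilon fun a => z ∈ S a}
      ≤ ν.real (⋃ a, symmDiff (C ⁻¹' {a}) (S a)) := measureReal_mono hsub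
    _ ≤ ∑ a, ν.real (symmDiff (C ⁻¹' {a}) (S a)) := measureReal_iUnion_fintype_le _
    _ ≤ ∑ _a : α, δ / Fintype.card α := Finset.sum_le_sum fun a _ =>
        ENNReal.toReal_le_of_le_ofReal (div_pos hδ hcard).le (hS a).le
    _ = δ := by
        rw [Finset.sum_const, Finset.card_univ, nsmul_eq_mul]
        exact mul_div_cancel₀ _ hcard.ne'

variable {Γ ι K X α : Type*}

lemma IsLocalOn.mono {S T : Finset Γ} {C : X × (Γ × ι → K) → α} (hC : IsLocalOn S C)
    (hST : S ⊆ T) : IsLocalOn T C := fun x =>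
  (hC x).mono (prod_mono_left (Finset.coe_subset.2 hST))

variable [MeasurableSpace X] [MeasurableSpace K]

lemma isSetAlgebra_isLocalOn :
    IsSetAlgebra {A : Set (X × (Γ × ι → K)) |
      MeasurableSet A ∧ ∃ S : Finset Γ, IsLocalOn S (· ∈ A)} := by
  classical
  refine ⟨⟨.empty, ∅, fun _ _ _ _ => rfl⟩, ?_, ?_⟩
  · rintro A ⟨hA, S, hAS⟩
    exact ⟨hA.compl, S, fun x ω ω' h => congrArg Not (hAS x h)⟩
  · rintro A B ⟨hA, S, hAS⟩ ⟨hB, T, hBT⟩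
    exact ⟨hA.union hB, S ∪ T, fun x ω ω' h => congrArg₂ Or
      (hAS.mono Finset.subset_union_left x h) (hBT.mono Finset.subset_union_right x h)⟩

lemma generateFrom_isLocalOn :
    (inferInstance : MeasurableSpace (X × (Γ × ι → K))) = MeasurableSpace.generateFrom
      {A | MeasurableSet A ∧ ∃ S : Finset Γ, IsLocalOn S (· ∈ A)} := by
  refine le_antisymm (sup_le ?_ ?_) (MeasurableSpace.generateFrom_le fun A hA => hA.1)
  · rintro _ ⟨A, hA, rfl⟩
    exact MeasurableSpace.measurableSet_generateFrom
      ⟨measurable_fst hA, ∅, fun _ _ _ _ => rfl⟩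
  · rw [← measurable_iff_comap_le]
    refine @measurable_pi_lambda _ _ _ (_) _ _ fun e A hA => ?_
    refine MeasurableSpace.measurableSet_generateFrom
      ⟨((measurable_pi_apply e).comp measurable_snd) hA, {e.1}, fun x ω ω' h => ?_⟩
    exact congrArg (· ∈ A) (h e ⟨by simp, mem_univ _⟩)

lemma exists_isLocalOn_measureReal_ne_le (ν : Measure (X × (Γ × ι → K))) [IsFiniteMeasure ν]
    [Finite α] [Nonempty α] [MeasurableSpace α] [MeasurableSingletonClass α]
    {C : X × (Γ × ι → K) → α} (hC : Measurable C) {δ : ℝ} (hδ : 0 < δ) :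
    ∃ C' : X × (Γ × ι → K) → α, Measurable C' ∧ (∃ S : Finset Γ, IsLocalOn S C') ∧
      ν.real {z | C z ≠ C' z} ≤ δ := by
  classical
  have := Fintype.ofFinite α
  obtain ⟨A, hA, hνA⟩ := exists_mem_isSetAlgebra_measureReal_ne_epsilon_le (ν := ν)
    isSetAlgebra_isLocalOn generateFrom_isLocalOn hC hδ
  choose hAm S hAS using hA
  have hmem : Measurable fun (z : X × (Γ × ι → K)) a => z ∈ A a :=
    measurable_pi_lambda _ fun a => measurableSet_setOfPred.1 (hAm a)
  refine ⟨fun z => Classical.epsilon fun a => z ∈ A a,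
    (measurable_of_countable Classical.epsilon).comp hmem,
    ⟨Finset.univ.biUnion S, fun x ω ω' h => congrArg Classical.epsilon (funext fun a => ?_)⟩, hνA⟩
  exact (hAS a).mono (Finset.subset_biUnion_of_mem S (Finset.mem_univ a)) x h

end Approximation

section AbertWeiss

lemma PMP.abs_measureReal_image_inter_sub_le {G Z α : Type*} [Group G] [MeasurableSpace Z]
    {ν : Measure Z} [IsFiniteMeasure ν] [MeasurableSpace α] [MeasurableSingletonClass α]
    [MeasurableEq α] (g : PMP G Z ν) {C C' : Z → α} (hC : Measurable C) (hC' : Measurable C')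
    (γ : G) (i j : α) :
    |ν.real (g.act γ '' (C' ⁻¹' {i}) ∩ C' ⁻¹' {j}) -
      ν.real (g.act γ '' (C ⁻¹' {i}) ∩ C ⁻¹' {j})| ≤ 2 * ν.real {z | C z ≠ C' z} := by
  have hmeas {B : Z → α} (hB : Measurable B) :
      NullMeasurableSet (g.act γ '' (B ⁻¹' {i}) ∩ B ⁻¹' {j}) ν :=
    ((g.measurableSet_image_act γ (hB (measurableSet_singleton i))).inter
      (hB (measurableSet_singleton j))).nullMeasurableSet
  have hne : MeasurableSet {z | C z ≠ C' z} := (measurableSet_eq_fun hC hC').compl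
  calc _ ≤ ν.real (symmDiff (g.act γ '' (C' ⁻¹' {i}) ∩ C' ⁻¹' {j})
          (g.act γ '' (C ⁻¹' {i}) ∩ C ⁻¹' {j})) :=
        abs_measureReal_sub_le_measureReal_symmDiff (hmeas hC') (hmeas hC)
    _ ≤ ν.real (g.act γ '' {z | C z ≠ C' z} ∪ {z | C z ≠ C' z}) := by
        refine measureReal_mono fun z hz => ?_
        simp only [g.image_act, mem_symmDiff, mem_inter_iff, mem_preimage, mem_singleton_iff,
          mem_union, mem_ofPred_eq] at hz ⊢
        grind
    _ ≤ ν.real (g.act γ '' {z | C z ≠ C' z}) + ν.real {z | C z ≠ C' z} :=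
        measureReal_union_le _ _
    _ = 2 * ν.real {z | C z ≠ C' z} := by
        rw [measureReal_def, g.measure_image_act γ hne, ← measureReal_def, two_mul]

variable {Γ ι K X : Type*} [Group Γ] [MeasurableSpace X] [MeasurableSpace K] {μ : Measure X}
  [IsProbabilityMeasure μ] (law : ι → Measure K) [∀ i, IsProbabilityMeasure (law i)]

lemma IsLocalOn.comp_act [DecidableEq Γ] {α : Type*} {S : Finset Γ} {C : X × (Γ × ι → K) → α}
    (hC : IsLocalOn S C) (f : PMP Γ X μ) (γ : Γ) :
    IsLocalOn (S.image (· * γ)) (C ∘ (f.prod (bernoulliShift Γ law)).act γ) := fun x _ _ h =>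
  hC (f.act γ x) fun _ he => h _ ⟨Finset.mem_image_of_mem (· * γ) he.1, mem_univ _⟩

lemma IsLocalOn.exists_image_inter {α : Type*} {S : Finset Γ} {C : X × (Γ × ι → K) → α}
    (hC : IsLocalOn S C) (f : PMP Γ X μ) (F : Finset Γ) :
    ∃ T : Finset Γ, ∀ γ ∈ F, ∀ i j, IsLocalOn T
      (· ∈ (f.prod (bernoulliShift Γ law)).act γ '' (C ⁻¹' {i}) ∩ C ⁻¹' {j}) := by
  classical
  refine ⟨S ∪ F.biUnion fun γ => S.image (· * γ⁻¹), fun γ hγ i j x ω ω' h => ?_⟩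
  simp only [PMP.image_act, mem_inter_iff, mem_preimage, mem_singleton_iff]
  refine congrArg₂ (fun a b => a = i ∧ b = j) ?_ ?_
  · exact (hC.comp_act law f γ⁻¹).mono ((Finset.subset_biUnion_of_mem
      (fun γ => S.image (· * γ⁻¹)) hγ).trans Finset.subset_union_right) x h
  · exact hC.mono Finset.subset_union_left x h

lemma PMP.image_act_preimage_orbitLabels {α Q : Type*} (f : PMP Γ X μ) (q : X → Q)
    (k : Q × ι → K) (C : X × (Γ × ι → K) → α) (γ : Γ) (i j : α) :
    f.act γ '' ((fun x => C (x, f.orbitLabels q k x)) ⁻¹' {i}) ∩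
        (fun x => C (x, f.orbitLabels q k x)) ⁻¹' {j} =
      {x | (x, f.orbitLabels q k x) ∈
        (f.prod (bernoulliShift Γ law)).act γ '' (C ⁻¹' {i}) ∩ C ⁻¹' {j}} := by
  ext x
  simp only [PMP.image_act, mem_inter_iff, mem_preimage, mem_ofPred_eq, f.orbitLabels_act]
  rfl

/-- The Abért–Weiss theorem. A partition of the product is approximated by one that reads only
finitely many labels, and then the labels are simulated by colouring the orbits. -/
lemma IsFreeAction.weaklyContains_prod_bernoulliShift [Countable Γ]
    [MeasurableSpace.CountablyGenerated X] [MeasurableSpace.SeparatesPoints X] [MeasurableEq X]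
    [NullSingletonClass μ] {f : PMP Γ X μ} (hf : IsFreeAction f) :
    WeaklyContains f (f.prod (bernoulliShift Γ law)) := by
  intro n hn C hC F ε hε
  have : NeZero n := ⟨Nat.one_le_iff_ne_zero.1 hn⟩
  set g := f.prod (bernoulliShift Γ law)
  obtain ⟨C', hC', ⟨S, hS⟩, hCC'⟩ := exists_isLocalOn_measureReal_ne_le
    (μ.prod (labelMeasure Γ law)) hC (div_pos hε four_pos)
  obtain ⟨T, hT⟩ := hS.exists_image_inter law f F
  let A (t : Γ × Fin n × Fin n) : Set (X × (Γ × ι → K)) :=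
    g.act t.1 '' (C' ⁻¹' {t.2.1}) ∩ C' ⁻¹' {t.2.2}
  let I : Finset (Γ × Fin n × Fin n) := F ×ˢ Finset.univ
  have hA : ∀ t ∈ I, MeasurableSet (A t) := fun t _ =>
    (g.measurableSet_image_act _ (hC' (measurableSet_singleton _))).inter
      (hC' (measurableSet_singleton _))
  obtain ⟨q, hq, hsep⟩ := exists_finite_colorings_eventually_ne X
  have hcoll := (tendsto_measureReal_collisionSet hf hq hsep T).const_mul (I.card : ℝ)
  rw [mul_zero] at hcoll
  obtain ⟨N, hN⟩ := (hcoll.eventually (ge_mem_nhds (pow_pos (half_pos hε) 2))).exists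
  obtain ⟨k, hk⟩ := exists_orbitLabels_forall_abs_sub_le law (hq N) I hA
    (fun t ht => hT t.1 (Finset.mem_product.1 ht).1 _ _) (half_pos hε).le hN
  refine ⟨fun x => C' (x, f.orbitLabels (q N) k x), hC'.comp (measurable_id.prodMk
    ((f.measurable_orbitLabels (hq N)).comp measurable_prodMk_right)), fun i j γ hγ => ?_⟩
  rw [f.image_act_preimage_orbitLabels law]
  have hsimulate := hk (γ, i, j) (Finset.mem_product.2 ⟨hγ, Finset.mem_univ _⟩)
  have happrox := g.abs_measureReal_image_inter_sub_le hC hC' γ i j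
  refine (abs_sub_le _ ((μ.prod (labelMeasure Γ law)).real (A (γ, i, j))) _).trans ?_
  calc _ ≤ ε / 2 + 2 * (ε / 4) :=
        add_le_add hsimulate (happrox.trans (mul_le_mul_of_nonneg_left hCC' zero_le_two))
    _ = ε := by ring

end AbertWeiss

/-! ### Free groups in the orbits of a Bernoulli extension -/

lemma exists_pairwise_disjoint_frequently_mem (ι : Type*) [Countable ι] :
    ∃ N : ι → Set ℕ, Pairwise (Function.onFun Disjoint N) ∧ ∀ c, ∃ᶠ n in atTop, n ∈ N c := by
  have := Encodable.ofCountable ι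
  refine ⟨fun c => {n | (Nat.unpair n).1 = Encodable.encode c}, fun c d hcd => ?_, fun c => ?_⟩
  · exact Set.disjoint_left.2 fun n hc hd => hcd (Encodable.encode_injective (hc.symm.trans hd))
  · exact frequently_atTop.2 fun m => ⟨Nat.pair (Encodable.encode c) m, Nat.right_le_pair _ _,
      congrArg Prod.fst (Nat.unpair_pair _ _)⟩

lemma exists_pmf_forall_measure_compl_iUnion_matched {Γ : Type*} [Group Γ] [Encodable Γ]
    [MeasurableSpace Γ] [MeasurableSingletonClass Γ] (hna : ¬ IsAmenable Γ) :
    ∃ q : ℕ → PMF Γ, ∀ N : Set ℕ, (∃ᶠ n in atTop, n ∈ N) →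
      labelMeasure Γ (fun n => (q n).toMeasure) (⋃ n, matched N n)ᶜ = 0 := by
  have := infinite_of_not_isAmenable hna
  obtain ⟨p, ρ, hp⟩ := exists_isDecayingWalk hna
  obtain ⟨n₀, hn₀⟩ := exists_sum_two_mul_pow_add_le hp.lt_one
  have hpow : Tendsto (fun n => ρ ^ (n + n₀)) atTop (𝓝 0) :=
    (tendsto_add_atTop_iff_nat n₀).2 (ENNReal.tendsto_pow_atTop_nhds_zero_of_lt_one hp.lt_one)
  have hpow' : Tendsto (fun n => 2 * ρ ^ (n + n₀)) atTop (𝓝 0) := by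
    simpa using ENNReal.Tendsto.const_mul hpow (Or.inr ENNReal.ofNat_ne_top)
  refine ⟨fun n => p (n + n₀), fun N hN => measure_compl_iUnion_matched _ hN hpow ?_ ?_⟩
  · intro n s
    rw [PMF.toMeasure_apply_singleton _ _ (measurableSet_singleton s)]
    exact hp.le_pow _ _
  · exact tendsto_of_tendsto_of_tendsto_of_le_of_le tendsto_const_nhds hpow'
      (fun _ => zero_le) (hp.measure_closesCycle_le hn₀)

lemma exists_freeGroup_action_prod_bernoulliShift (ι : Type*) {Γ X : Type*} [Countable ι]
    [Group Γ] [Countable Γ] [MeasurableSpace Γ] [MeasurableSingletonClass Γ]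
    (hna : ¬ IsAmenable Γ) [MeasurableSpace X] {μ : Measure X} [IsProbabilityMeasure μ]
    {f : PMP Γ X μ} (hf : IsFreeAction f) :
    ∃ (q : ℕ → PMF Γ) (h : PMP (FreeGroup ι) (X × (Γ × ℕ → Γ))
      (μ.prod (labelMeasure Γ fun n => (q n).toMeasure))), IsFreeAction h ∧
      ∀ z t, ∃ γ, h.act t z = (f.prod (bernoulliShift Γ fun n => (q n).toMeasure)).act γ z := by
  have := Encodable.ofCountable Γ
  obtain ⟨q, hq⟩ := exists_pmf_forall_measure_compl_iUnion_matched hna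
  obtain ⟨N, hdisj, hN⟩ := exists_pairwise_disjoint_frequently_mem ι
  exact ⟨q, exists_freeGroup_action_of_matchings _ (hf.prod _) measurePreserving_snd
    (fun _ _ => rfl) hdisj fun c => hq (N c) (hN c)⟩

theorem measurable_von_neumann_in_weak_equivalence_class_general
    (ι : Type*) {Γ X : Type*} [Countable ι] [Group Γ] [Countable Γ] (hna : ¬ IsAmenable Γ)
    [MeasurableSpace X] [StandardBorelSpace X] (μ : Measure X) [IsProbabilityMeasure μ]
    (f : PMP Γ X μ) (hfree : IsFreeAction f) :
    ∃ g : PMP Γ X μ, WeaklyEquivalent f g ∧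
      ∃ h : PMP (FreeGroup ι) X μ, IsFreeAction h ∧
        ∀ᵐ x ∂μ, ∀ t : FreeGroup ι, ∃ γ : Γ, h.act t x = g.act γ x := by
  let _ : MeasurableSpace Γ := ⊤
  have : DiscreteMeasurableSpace Γ := ⟨fun _ => trivial⟩
  have := infinite_of_not_isAmenable hna
  have := hfree.nullSingletonClass
  obtain ⟨q, h, hh, horbit⟩ := exists_freeGroup_action_prod_bernoulliShift ι hna hfree
  set a := f.prod (bernoulliShift Γ fun n => (q n).toMeasure)
  obtain ⟨e⟩ := nonempty_measureIso μ (μ.prod (labelMeasure Γ fun n => (q n).toMeasure))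
  have hae := a.weaklyEquivalent_transport e
  have haf : WeaklyContains a f :=
    .of_factor a f measurePreserving_fst fun _ => ae_of_all _ fun _ => rfl
  refine ⟨a.transport e, ⟨(hfree.weaklyContains_prod_bernoulliShift _).trans hae.1,
    hae.2.trans haf⟩, h.transport e, hh.transport e, ?_⟩
  filter_upwards [a.transport_act_ae e, h.transport_act_ae e] with x hax hhx t
  obtain ⟨γ, hγ⟩ := horbit (e.toFun x) t
  exact ⟨γ, by rw [hax, hhx, hγ]⟩

theorem measurable_von_neumann_in_weak_equivalence_class
    {Γ X : Type} [Group Γ] [Countable Γ] (hna : ¬ IsAmenable Γ)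
    [MeasurableSpace X] [StandardBorelSpace X]
    (μ : Measure X) [IsProbabilityMeasure μ]
    (f : PMP Γ X μ) (hfree : IsFreeAction f) :
    ∃ g : PMP Γ X μ, WeaklyEquivalent f g ∧
      ∃ h : PMP (FreeGroup (Fin 2)) X μ, IsFreeAction h ∧
        ∀ᵐ x ∂μ, ∀ t : FreeGroup (Fin 2), ∃ γ : Γ, h.act t x = g.act γ x :=
  measurable_von_neumann_in_weak_equivalence_class_general (Fin 2) hna μ f hfree
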